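/- arXiv:2312.11061 — 12 statements merged into one kernel-verified Lean document; each statement's English description precedes it below -/
import Mathlib

section
/- Fix integers n ≥ l > 1, a vector a ∈ (0,∞)^l and a constant b ≥ 0. Then there exist a vector v ∈ (0,∞)^n and a constant λ > 0 such that for every matrix F ∈ ℱ(a,b,l) and every index i ∈ {1,…,n}, ∑_{k=1}^n v_k F_{ki} ≤ −λ v_i (i.e. vᵀF ≤ −λvᵀ componentwise). -/
open Finset

/-- An `n × n` real matrix is compartmental if it is Metzler (nonnegative
off-diagonal entries) and all of its column sums are nonpositive. -/
def IsCompartmental {n : ℕ} (F : Matrix (Fin n) (Fin n) ℝ) : Prop :=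
  (∀ i j : Fin n, i ≠ j → 0 ≤ F i j) ∧ ∀ i : Fin n, (∑ k, F k i) ≤ 0

/-- The set `ℱ(a,b,l)` of compartmental matrices (indices `0`-based: paper index
`i ∈ {1,…,n}` corresponds to `i - 1 : Fin n`):
every entry strictly above the diagonal is at most `b`;
`∑_{k=i+1}^n F_{ki} ≥ a_i` for `i = 1,…,l-1`;
`∑_{k=1}^n F_{ki} ≤ -a_l` for `i = l,…,n`. -/
def MemCalF {n l : ℕ} (hl : 1 < l) (hln : l ≤ n) (a : Fin l → ℝ) (b : ℝ)
    (F : Matrix (Fin n) (Fin n) ℝ) : Prop :=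
  IsCompartmental F ∧
  (∀ i j : Fin n, i < j → F i j ≤ b) ∧
  (∀ i : Fin n, (hi : (i : ℕ) + 1 < l) →
    a ⟨i, Nat.lt_of_succ_lt hi⟩ ≤ ∑ k ∈ univ.filter (fun k : Fin n => i < k), F k i) ∧
  (∀ i : Fin n, l - 1 ≤ (i : ℕ) → (∑ k, F k i) ≤ -(a ⟨l - 1, by omega⟩))

/-- for fixed `n ≥ l > 1`, `a ∈ (0,∞)^l` and `b ≥ 0`, there exist a
vector `v ∈ (0,∞)^n` and a constant `λ > 0` such that `vᵀ F ≤ -λ vᵀ`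
componentwise for every `F ∈ ℱ(a,b,l)`. -/
theorem stmt0 (n l : ℕ) (hl : 1 < l) (hln : l ≤ n)
    (a : Fin l → ℝ) (ha : ∀ i, 0 < a i) (b : ℝ) (hb : 0 ≤ b) :
    ∃ (v : Fin n → ℝ) (lam : ℝ), (∀ i, 0 < v i) ∧ 0 < lam ∧
      ∀ F : Matrix (Fin n) (Fin n) ℝ, MemCalF hl hln a b F →
        ∀ i : Fin n, (∑ k, v k * F k i) ≤ -lam * v i := by
  have : Nonempty (Fin l) := ⟨⟨0, by omega⟩⟩
  obtain ⟨j0, hj0⟩ := Finite.exists_min a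
  have hα := ha j0
  set α := a j0
  obtain ⟨q, hq⟩ : ∃ q : ℝ, q = 2 + 2 * b * n / α := ⟨_, rfl⟩
  have hfr : 0 ≤ 2 * b * n / α := by positivity
  have hq2 : 2 ≤ q := by linarith
  have hqα : 2 * b * n ≤ α * (q - 1) := by
    have : α * (2 * b * n / α) = 2 * b * n := by field_simp
    rw [hq]; nlinarith
  have hq1 : (1:ℝ) ≤ q := by linarith
  have hpow : ∀ m : ℕ, (1:ℝ) ≤ q ^ m := fun m => one_le_pow₀ hq1
  have hmono : ∀ m m' : ℕ, m ≤ m' → q ^ m ≤ q ^ m' := fun m m' h => pow_le_pow_right₀ hq1 h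
  have hql := hpow l
  have hs : q ^ l = q ^ (l - 1) * q := by rw [← pow_succ]; congr 1; omega
  refine ⟨fun k => q ^ l - q ^ (min (k : ℕ) (l - 1)), α / (2 * q ^ l), ?_, by positivity, ?_⟩
  · intro i
    have h1 := hmono (min (i : ℕ) (l - 1)) (l - 1) (min_le_right _ _)
    have h2 := hpow (l - 1)
    show 0 < q ^ l - q ^ (min (i : ℕ) (l - 1))
    nlinarith
  rintro F ⟨⟨hM, hc⟩, hub, h3, h4⟩ i
  have hP := hpow (min (i : ℕ) (l - 1))
  have hPl := hmono (min (i : ℕ) (l - 1)) (l - 1) (min_le_right _ _)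
  have hup : ∀ k : Fin n, k < i →
      ((q ^ l - q ^ (min (k : ℕ) (l - 1))) - (q ^ l - q ^ (min (i : ℕ) (l - 1)))) * F k i
        ≤ b * q ^ (min (i : ℕ) (l - 1)) := by
    intro k hk
    have e1 := hM k i hk.ne
    have e2 := hub k i hk
    have e3 := hpow (min (k : ℕ) (l - 1))
    have e4 : q ^ (min (i : ℕ) (l - 1)) * F k i ≤ q ^ (min (i : ℕ) (l - 1)) * b :=
      mul_le_mul_of_nonneg_left e2 (by linarith)
    nlinarith
  have hsplit : ∑ k : Fin n, (q ^ l - q ^ (min (k : ℕ) (l - 1))) * F k i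
      = ∑ k : Fin n, ((q ^ l - q ^ (min (k : ℕ) (l - 1))) - (q ^ l - q ^ (min (i : ℕ) (l - 1)))) * F k i
        + (q ^ l - q ^ (min (i : ℕ) (l - 1))) * ∑ k, F k i := by
    rw [Finset.mul_sum, ← Finset.sum_add_distrib]
    exact Finset.sum_congr rfl fun k _ => by ring
  have hvi : 0 ≤ q ^ l - q ^ (min (i : ℕ) (l - 1)) := by
    have h2 := hpow (l - 1)
    nlinarith
  have key : ∑ k : Fin n, (q ^ l - q ^ (min (k : ℕ) (l - 1))) * F k i
      ≤ n * (b * q ^ (min (i : ℕ) (l - 1))) - α * (q ^ (min (i : ℕ) (l - 1)) * (q - 1)) := by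
    rw [hsplit]
    by_cases hi : (i : ℕ) + 1 < l
    · have hmi : min (i : ℕ) (l - 1) = i := by omega
      have g1 := h3 i hi
      have g2 := hj0 ⟨i, Nat.lt_of_succ_lt hi⟩
      have g3 := mul_nonpos_of_nonneg_of_nonpos hvi (hc i)
      have g4 : ∑ k : Fin n, ((q ^ l - q ^ (min (k : ℕ) (l - 1)))
            - (q ^ l - q ^ (min (i : ℕ) (l - 1)))) * F k i
          ≤ ∑ k : Fin n, (b * q ^ (min (i : ℕ) (l - 1))
            - (if i < k then (q ^ (min (i : ℕ) (l - 1)) * (q - 1)) * F k i else 0)) := by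
        refine Finset.sum_le_sum fun k _ => ?_
        rcases lt_trichotomy k i with hk | hk | hk
        · rw [if_neg hk.le.not_gt, sub_zero]; exact hup k hk
        · subst hk
          simp only [lt_irrefl, if_false, sub_self, zero_mul, sub_zero]
          positivity
        · rw [if_pos hk]
          have e1 := hM k i hk.ne'
          have hk' : (i : ℕ) < k := hk
          have e2 := hmono (min (i : ℕ) (l - 1) + 1) (min (k : ℕ) (l - 1)) (by omega)
          rw [pow_succ] at e2
          have e3 : 0 ≤ b * q ^ (min (i : ℕ) (l - 1)) := by positivity
          nlinarith [mul_le_mul_of_nonneg_right e2 e1]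
      rw [Finset.sum_sub_distrib, ← Finset.sum_filter] at g4
      simp only [Finset.sum_const, Finset.card_univ, Fintype.card_fin, nsmul_eq_mul] at g4
      rw [← Finset.mul_sum (Finset.univ.filter fun k : Fin n => i < k)] at g4
      have g5 : 0 ≤ q ^ (min (i : ℕ) (l - 1)) * (q - 1) :=
        mul_nonneg (by linarith) (by linarith)
      have g6 := mul_le_mul_of_nonneg_left (g2.trans g1) g5
      linarith
    · have hmi : min (i : ℕ) (l - 1) = l - 1 := by omega
      have g1 := h4 i (by omega)
      have g2 := hj0 ⟨l - 1, by omega⟩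
      have g3 : ∑ k, F k i ≤ -α := by linarith
      have g4 : ∑ k : Fin n, ((q ^ l - q ^ (min (k : ℕ) (l - 1)))
            - (q ^ l - q ^ (min (i : ℕ) (l - 1)))) * F k i
          ≤ ∑ k : Fin n, (b * q ^ (min (i : ℕ) (l - 1))) := by
        refine Finset.sum_le_sum fun k _ => ?_
        have e3 : 0 ≤ b * q ^ (min (i : ℕ) (l - 1)) := by positivity
        rcases lt_or_ge k i with hk | hk
        · exact hup k hk
        · have hk' : (i : ℕ) ≤ k := hk
          have : min (k : ℕ) (l - 1) = min (i : ℕ) (l - 1) := by omega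
          rw [this, sub_self, zero_mul]; exact e3
      simp only [Finset.sum_const, Finset.card_univ, Fintype.card_fin, nsmul_eq_mul] at g4
      have g6 := mul_le_mul_of_nonneg_left g3 hvi
      have g7 : q ^ l - q ^ (min (i : ℕ) (l - 1)) = q ^ (min (i : ℕ) (l - 1)) * (q - 1) := by
        rw [hmi, hs]; ring
      have g8 : (q ^ l - q ^ (min (i : ℕ) (l - 1))) * -α
          = -(α * (q ^ (min (i : ℕ) (l - 1)) * (q - 1))) := by rw [g7]; ring
      linarith
  show ∑ k : Fin n, (q ^ l - q ^ (min (k : ℕ) (l - 1))) * F k i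
    ≤ -(α / (2 * q ^ l)) * (q ^ l - q ^ (min (i : ℕ) (l - 1)))
  refine key.trans ?_
  have f1 : α / (2 * q ^ l) * q ^ l = α / 2 := by field_simp
  have f2 : 0 ≤ α / (2 * q ^ l) * q ^ (min (i : ℕ) (l - 1)) := by positivity
  have f3 := mul_le_mul_of_nonneg_right hqα (zero_le_one.trans hP)
  have f4 : α ≤ α * (q ^ (min (i : ℕ) (l - 1)) * (q - 1)) :=
    le_mul_of_one_le_right hα.le (one_le_mul_of_one_le_of_one_le hP (by linarith))
  linarith
end

section
/- Fix integers n ≥ l > 1, a vector a ∈ (0,∞)^l, a constant b ≥ 0, and any σ ∈ (0,∞)^l. Define p ∈ ℝ^l by p_1 = σ_1 and p_i = σ_i + (b/a_i) ∑_{j=1}^{i−1} j·p_j for i = 2,…,l; define v ∈ ℝ^n by v_i = ∑_{j=i}^l p_j for i = 1,…,l−1 and v_i = p_l for i = l,…,n; and define λ = min{a_1σ_1,…,a_lσ_l} / ∑_{j=1}^l p_j. Then v ∈ (0,∞)^n, λ > 0, and for every F ∈ ℱ(a,b,l) and every index i ∈ {1,…,n}, ∑_{k=1}^n v_k F_{ki}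 ≤ −λ v_i. -/
open Finset

/-- the explicit construction of `p`, `v` and `λ` from a free
parameter `σ ∈ (0,∞)^l` yields `v ∈ (0,∞)^n`, `λ > 0` and `vᵀ F ≤ -λ vᵀ` for
every `F ∈ ℱ(a,b,l)`.  (In `0`-based indices: `p_0 = σ_0`, and
`p_i = σ_i + (b/a_i) ∑_{j<i} (j+1) p_j`; `v_i = ∑_{j=i}^{l-1} p_j` for
`i < l - 1` and `v_i = p_{l-1}` otherwise; `λ = min_i (a_i σ_i) / ∑_j p_j`.) -/
theorem stmt1 (n l : ℕ) (hl : 1 < l) (hln : l ≤ n)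
    (a : Fin l → ℝ) (ha : ∀ i, 0 < a i) (b : ℝ) (hb : 0 ≤ b)
    (σ : Fin l → ℝ) (hσ : ∀ i, 0 < σ i)
    (p : Fin l → ℝ)
    (hp : ∀ i : Fin l, p i = σ i + (b / a i) *
      ∑ j ∈ univ.filter (fun j : Fin l => j < i), (((j : ℕ) : ℝ) + 1) * p j)
    (v : Fin n → ℝ)
    (hv : ∀ i : Fin n, v i =
      if (i : ℕ) < l - 1 then
        ∑ j ∈ univ.filter (fun j : Fin l => (i : ℕ) ≤ (j : ℕ)), p j
      else p ⟨l - 1, by omega⟩)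
    (lam : ℝ)
    (hlam : lam =
      (univ.inf' ⟨⟨0, by omega⟩, mem_univ _⟩ (fun i : Fin l => a i * σ i)) / ∑ j, p j) :
    (∀ i, 0 < v i) ∧ 0 < lam ∧
      ∀ F : Matrix (Fin n) (Fin n) ℝ, MemCalF hl hln a b F →
        ∀ i : Fin n, (∑ k, v k * F k i) ≤ -lam * v i := by
  have hpos : ∀ m : ℕ, ∀ i : Fin l, (i : ℕ) = m → 0 < p i := by
    intro m
    induction m using Nat.strong_induction_on with
    | _ m ih =>
      intro i him
      rw [hp i]
      have h1 : 0 ≤ ∑ j ∈ univ.filter (fun j : Fin l => j < i), (((j : ℕ) : ℝ) + 1) * p j := by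
        apply Finset.sum_nonneg
        intro j hj
        have hj' : j < i := by simpa using hj
        have := ih j (by rw [← him]; exact hj') j rfl
        positivity
      have h2 := div_nonneg hb (ha i).le
      have h3 := hσ i
      have h4 := mul_nonneg h2 h1
      linarith
  have hp0 : ∀ i, 0 < p i := fun i => hpos i i rfl
  -- uniform formula for v
  have hv' : ∀ k : Fin n, v k =
      ∑ j : Fin l, p j * (if (k : ℕ) ≤ j ∨ (j : ℕ) = l - 1 then 1 else 0) := by
    intro k
    rw [hv k]
    split_ifs with h
    · rw [Finset.sum_filter]
      refine Finset.sum_congr rfl fun j _ => ?_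
      by_cases h1 : (k : ℕ) ≤ j
      · simp [h1]
      · have h2 : ¬ (j : ℕ) = l - 1 := by omega
        simp [h1, h2]
    · rw [Finset.sum_eq_single (⟨l - 1, by omega⟩ : Fin l)]
      · simp
      · intro j _ hj
        have h2 : ¬ (j : ℕ) = l - 1 := fun h => hj (Fin.ext h)
        have h1 : ¬ (k : ℕ) ≤ j := by have := j.2; omega
        simp [h1, h2]
      · simp
  have hvpos : ∀ i, 0 < v i := by
    intro i
    rw [hv i]
    split_ifs with h
    · exact Finset.sum_pos (fun j _ => hp0 j) ⟨⟨i, by omega⟩, by simp⟩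
    · exact hp0 _
  have hvle : ∀ i, v i ≤ ∑ j, p j := by
    intro i
    rw [hv' i]
    refine Finset.sum_le_sum fun j _ => ?_
    have := hp0 j
    split_ifs <;> linarith
  have hP : 0 < ∑ j, p j := Finset.sum_pos (fun j _ => hp0 j) ⟨⟨0, by omega⟩, mem_univ _⟩
  have hlam0 : 0 < lam := by
    rw [hlam]
    refine div_pos ?_ hP
    refine (Finset.lt_inf'_iff _).mpr ?_
    intro i _
    exact mul_pos (ha i) (hσ i)
  have hlamle : ∀ i : Fin l, lam * ∑ j, p j ≤ a i * σ i := by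
    intro i
    rw [hlam, div_mul_cancel₀ _ hP.ne']
    exact Finset.inf'_le (fun i : Fin l => a i * σ i) (mem_univ i)
  refine ⟨hvpos, hlam0, ?_⟩
  rintro F ⟨⟨hM, hC⟩, hB, hA, hL⟩ i
  obtain ⟨S, hS⟩ : ∃ S : Fin l → ℝ, ∀ j, S j =
      ∑ k : Fin n, (if (k : ℕ) ≤ j ∨ (j : ℕ) = l - 1 then F k i else 0) := ⟨_, fun _ => rfl⟩
  have hsum : ∑ k, v k * F k i = ∑ j, p j * S j := by
    simp_rw [hv', hS, Finset.sum_mul, Finset.mul_sum]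
    rw [Finset.sum_comm]
    refine Finset.sum_congr rfl fun j _ => Finset.sum_congr rfl fun k _ => ?_
    split_ifs <;> ring
  have hi'lt : min (i : ℕ) (l - 1) < l := by omega
  obtain ⟨i', hi'⟩ : ∃ i' : Fin l, (i' : ℕ) = min (i : ℕ) (l - 1) := ⟨⟨_, hi'lt⟩, rfl⟩
  have hS1 : ∀ j : Fin l, j < i' → S j ≤ ((j : ℕ) + 1) * b := by
    intro j hj
    have hj' : (j : ℕ) < i' := hj
    have hjn : (j : ℕ) < n := by omega
    rw [hS]
    calc _ ≤ ∑ k : Fin n, (if k ∈ Finset.Iic (⟨j, hjn⟩ : Fin n) then b else 0) := by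
          refine Finset.sum_le_sum fun k _ => ?_
          have h2 : ¬ (j : ℕ) = l - 1 := by omega
          by_cases h1 : (k : ℕ) ≤ j
          · have hk : k ≤ (⟨j, hjn⟩ : Fin n) := h1
            have hki : k < i := by
              show (k : ℕ) < i
              omega
            simpa [h1, hk] using hB k i hki
          · have hk : ¬ k ≤ (⟨j, hjn⟩ : Fin n) := h1
            simp [h1, h2, hk]
      _ = _ := by
          rw [Finset.sum_ite_mem, Finset.univ_inter, Finset.sum_const, Fin.card_Iic]
          simp
  have hS2 : S i' ≤ - a i' := by
    rw [hS]
    by_cases h : (i : ℕ) + 1 < l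
    · have e : i' = ⟨i, Nat.lt_of_succ_lt h⟩ := Fin.ext (by simp only [hi']; omega)
      have h1 := hA i h
      rw [← e, Finset.sum_filter] at h1
      have h2 := hC i
      have h3 : ∑ k, F k i = ∑ k : Fin n, (if (k : ℕ) ≤ i' ∨ (i' : ℕ) = l - 1 then F k i else 0)
          + ∑ k : Fin n, (if i < k then F k i else 0) := by
        rw [← Finset.sum_add_distrib]
        refine Finset.sum_congr rfl fun k _ => ?_
        have h5 : ¬ (i' : ℕ) = l - 1 := by omega
        have h6 : (i' : ℕ) = i := by omega
        by_cases h4 : i < k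
        · have h7 : ¬ (k : ℕ) ≤ i' := by
            have : (i : ℕ) < k := h4
            omega
          simp only [h4, h5, h7]; simp
        · have h7 : (k : ℕ) ≤ i' := by
            have : ¬ (i : ℕ) < k := h4
            omega
          simp only [h4, h5, h7]; simp
      linarith
    · have e : i' = ⟨l - 1, by omega⟩ := Fin.ext (by simp only [hi']; omega)
      have h1 := hL i (by omega)
      rw [e]
      simpa using h1
  have hS3 : ∀ j : Fin l, i' < j → S j ≤ 0 := by
    intro j hj
    have hj' : (i' : ℕ) < j := hj
    have := j.2
    rw [hS]
    refine le_trans (Finset.sum_le_sum fun k _ => ?_) (hC i)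
    split_ifs with h
    · exact le_rfl
    · apply hM
      rintro rfl
      apply h
      omega
  have hkey : ∑ j, p j * S j ≤ - (a i' * σ i') := by
    have hterm : ∀ j, p j * S j ≤
        (if j < i' then b * ((((j : ℕ) : ℝ) + 1) * p j) else 0)
          + (if j = i' then - (a i' * p i') else 0) := by
      intro j
      have hpj := hp0 j
      rcases lt_trichotomy j i' with h | h | h
      · have := mul_le_mul_of_nonneg_left (hS1 j h) hpj.le
        simp only [h, h.ne, if_true, if_false]
        linarith
      · subst h
        have := mul_le_mul_of_nonneg_left hS2 hpj.le
        simp only [lt_irrefl, if_true, if_false]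
        linarith
      · have := mul_le_mul_of_nonneg_left (hS3 j h) hpj.le
        simp only [not_lt.mpr h.le, h.ne', if_false]
        linarith
    refine (Finset.sum_le_sum fun j _ => hterm j).trans ?_
    rw [Finset.sum_add_distrib, ← Finset.sum_filter, ← Finset.mul_sum]
    have h1 : ∑ j, (if j = i' then - (a i' * p i') else 0) = - (a i' * p i') := by simp
    rw [h1]
    have h2 : a i' * p i' = a i' * σ i' + b *
        ∑ j ∈ univ.filter (fun j : Fin l => j < i'), (((j : ℕ) : ℝ) + 1) * p j := by
      conv_lhs => rw [hp i']
      have := (ha i').ne'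
      field_simp
    linarith
  rw [hsum]
  have h1 := hlamle i'
  have h2 := mul_le_mul_of_nonneg_left (hvle i) hlam0.le
  linarith
end

section
/- If a compartmental matrix F ∈ ℝ^{n×n} is outflow connected, then there exists a permutation r of {1,…,n} such that the matrix A defined by A_{ij} = F_{r(i) r(j)} is on outflow canonical form. -/
open Finset

/-- Vertex `i` is an outflow vertex when the `i`-th column sum is negative. -/
def OutflowVertex {n : ℕ} (F : Matrix (Fin n) (Fin n) ℝ) (i : Fin n) : Prop :=
  (∑ k, F k i) < 0

/-- `F` is outflow connected: the set of outflow vertices is nonempty and every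
vertex that is not an outflow vertex has a (directed) path to some outflow
vertex, where there is an edge from `u` to `v` when `F v u > 0`. -/
def OutflowConnected {n : ℕ} (F : Matrix (Fin n) (Fin n) ℝ) : Prop :=
  (∃ i, OutflowVertex F i) ∧
  ∀ i, ¬ OutflowVertex F i → ∃ j, OutflowVertex F j ∧
    Relation.ReflTransGen (fun u v : Fin n => 0 < F v u) i j

/-- `F` is on outflow canonical form: either every column sum is negative, or
there is `l ∈ {2,…,n}` such that the column sums of columns `l,…,n` are negative
(`0`-based: indices `i` with `l - 1 ≤ i`) and for every `i ∈ {1,…,l-1}`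
(`0`-based: `i < l - 1`) there is `j > i` with `F j i > 0`. -/
def OutflowCanonical {n : ℕ} (F : Matrix (Fin n) (Fin n) ℝ) : Prop :=
  (∀ i, (∑ k, F k i) < 0) ∨
  ∃ l : ℕ, 2 ≤ l ∧ l ≤ n ∧
    (∀ i : Fin n, l - 1 ≤ (i : ℕ) → (∑ k, F k i) < 0) ∧
    (∀ i : Fin n, (i : ℕ) < l - 1 → ∃ j : Fin n, i < j ∧ 0 < F j i)

/-- vertices with a path of exactly `k` edges to an outflow vertex -/
def stmt3Reach {n : ℕ} (F : Matrix (Fin n) (Fin n) ℝ) : ℕ → Fin n → Prop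
  | 0, i => OutflowVertex F i
  | k + 1, i => ∃ j, 0 < F j i ∧ stmt3Reach F k j

theorem stmt3_dist {n : ℕ} (F : Matrix (Fin n) (Fin n) ℝ) (hoc : OutflowConnected F) :
    ∃ d : Fin n → ℕ, (∀ i, d i = 0 ↔ OutflowVertex F i) ∧
      ∀ i, d i ≠ 0 → ∃ j, 0 < F j i ∧ d j < d i := by
  classical
  have hex : ∀ i, ∃ k, stmt3Reach F k i := by
    intro i
    by_cases hi : OutflowVertex F i
    · exact ⟨0, hi⟩
    · obtain ⟨j, hj, hp⟩ := hoc.2 i hi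
      induction hp using Relation.ReflTransGen.head_induction_on with
      | refl => exact ⟨0, hj⟩
      | head h _ ih =>
        rename_i a c _
        by_cases hc : OutflowVertex F c
        · exact ⟨1, c, h, hc⟩
        · obtain ⟨k, hk⟩ := ih hc
          exact ⟨k + 1, c, h, hk⟩
  refine ⟨fun i => Nat.find (hex i), fun i => ?_, fun i hi => ?_⟩
  · simp [Nat.find_eq_zero, stmt3Reach]
  · have hs := Nat.find_spec (hex i)
    obtain ⟨k, hk⟩ := Nat.exists_eq_succ_of_ne_zero hi
    simp only at hk
    rw [hk] at hs
    obtain ⟨j, hj, hjk⟩ := hs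
    refine ⟨j, hj, ?_⟩
    have := Nat.find_min' (hex j) hjk
    simp only
    omega

/-- every outflow connected compartmental matrix can be permuted
to a matrix on outflow canonical form. -/
theorem stmt3 (n : ℕ) (F : Matrix (Fin n) (Fin n) ℝ) (hF : IsCompartmental F)
    (hoc : OutflowConnected F) :
    ∃ r : Equiv.Perm (Fin n),
      OutflowCanonical (Matrix.of fun i j => F (r i) (r j)) := by
  classical
  obtain ⟨d, h0, hd⟩ := stmt3_dist F hoc
  let f : Fin n → ℕᵒᵈ := fun i => OrderDual.toDual (d i)
  let r := Tuple.sort f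
  have hr : ∀ a b, a ≤ b → d (r b) ≤ d (r a) := fun a b hab => Tuple.monotone_sort f hab
  have hsum : ∀ i, (∑ k, (Matrix.of fun i j => F (r i) (r j)) k i) = ∑ k, F k (r i) :=
    fun i => Equiv.sum_comp r (fun k => F k (r i))
  have hex : ∃ m : ℕ, ∃ h : m < n, d (r ⟨m, h⟩) = 0 := by
    obtain ⟨i, hi⟩ := hoc.1
    exact ⟨r.symm i, (r.symm i).2, by simpa using (h0 i).2 hi⟩
  obtain ⟨hm, hm0⟩ := Nat.find_spec hex
  have hmin : ∀ i : Fin n, (i : ℕ) < Nat.find hex → d (r i) ≠ 0 :=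
    fun i hi h => Nat.find_min hex hi ⟨i.2, h⟩
  generalize Nat.find hex = m at *
  have hge : ∀ i : Fin n, m ≤ (i : ℕ) → (∑ k, F k (r i)) < 0 := fun i hi =>
    (h0 _).1 (by have := hr ⟨m, hm⟩ i hi; omega)
  refine ⟨r, ?_⟩
  rcases Nat.eq_zero_or_pos m with h | h
  · left
    intro i
    rw [hsum]
    exact hge i (by omega)
  · right
    refine ⟨m + 1, by omega, by omega, fun i hi => ?_, fun i hi => ?_⟩
    · rw [hsum]
      exact hge i (by omega)
    · obtain ⟨j, hj, hlt⟩ := hd (r i) (hmin i (by omega))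
      refine ⟨r.symm j, ?_, by simpa using hj⟩
      by_contra hc
      have := hr _ _ (not_lt.1 hc)
      simp only [Equiv.apply_symm_apply] at this
      omega
end

section
/- If a compartmental matrix F ∈ ℝ^{n×n} is not outflow connected, then F contains a trap, i.e. there exists a nonempty K ⊆ {1,…,n} such that ∑_{k=1}^n F_{ki} = 0 for all i ∈ K and F_{ij} = 0 for all j ∈ K and i ∉ K. -/
open Finset

/-- a compartmental matrix which is not outflow connected contains
a trap: a nonempty set `K` of vertices whose column sums vanish and with no
edge from `K` to its complement. -/
theorem stmt4 (n : ℕ) (hn : 0 < n) (F : Matrix (Fin n) (Fin n) ℝ)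
    (hF : IsCompartmental F) (h : ¬ OutflowConnected F) :
    ∃ K : Finset (Fin n), K.Nonempty ∧
      (∀ i ∈ K, (∑ k, F k i) = 0) ∧
      (∀ j ∈ K, ∀ i ∉ K, F i j = 0) := by
  classical
  obtain ⟨v, hv⟩ : ∃ v, ∀ j, Relation.ReflTransGen (fun u v : Fin n => 0 < F v u) v j →
      ¬ OutflowVertex F j := by
    by_contra hc
    push Not at hc
    apply h
    refine ⟨?_, fun i _ => ?_⟩
    · obtain ⟨j, _, hj⟩ := hc ⟨0, hn⟩
      exact ⟨j, hj⟩
    · obtain ⟨j, h1, h2⟩ := hc i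
      exact ⟨j, h2, h1⟩
  refine ⟨Finset.univ.filter
    (fun j => Relation.ReflTransGen (fun u v : Fin n => 0 < F v u) v j), ⟨v, ?_⟩, ?_, ?_⟩
  · simp only [Finset.mem_filter, Finset.mem_univ, true_and]
    exact Relation.ReflTransGen.refl
  · intro i hi
    simp only [Finset.mem_filter, Finset.mem_univ, true_and] at hi
    exact le_antisymm (hF.2 i) (not_lt.mp (hv i hi))
  · intro j hj i hi
    simp only [Finset.mem_filter, Finset.mem_univ, true_and] at hj hi
    have hne : i ≠ j := by
      rintro rfl
      exact hi hj
    exact le_antisymm (not_lt.mp fun hlt => hi (hj.tail hlt)) (hF.1 i j hne)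
end

section
/- Let F ∈ ℝ^{n×n} be a compartmental matrix and K a trap of F. If K ≠ {1,…,n}, then for every x ∈ [0,∞)^n, ∑_{j∈K} (Fx)_j = ∑_{j∈K} ∑_{i∉K} F_{ji} x_i ≥ 0. Moreover, for any trap K of F, every differentiable q : [0,∞) → [0,∞)^n satisfying q′(t) = F q(t) for all t ≥ 0 satisfies ∑_{i∈K} q_i(t) ≥ ∑_{i∈K} q_i(0) for all t ≥ 0. -/
open Finset

/-- A nonempty set `K` of vertices is a trap of `F` if no element of `K` is an
outflow vertex (the column sums over `K` vanish) and there is no edge from `K`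
to its complement (`F i j = 0` for `j ∈ K`, `i ∉ K`). -/
def IsTrap {n : ℕ} (F : Matrix (Fin n) (Fin n) ℝ) (K : Finset (Fin n)) : Prop :=
  K.Nonempty ∧ (∀ i ∈ K, (∑ k, F k i) = 0) ∧ ∀ j ∈ K, ∀ i ∉ K, F i j = 0

theorem trap_sum {n : ℕ} (F : Matrix (Fin n) (Fin n) ℝ)
    (hF : IsCompartmental F) (K : Finset (Fin n)) (hK : IsTrap F K)
    (x : Fin n → ℝ) (hx : ∀ i, 0 ≤ x i) :
    (∑ j ∈ K, F.mulVec x j = ∑ j ∈ K, ∑ i ∈ Kᶜ, F j i * x i) ∧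
      0 ≤ ∑ j ∈ K, F.mulVec x j := by
  obtain ⟨-, h0, h1⟩ := hK
  have key : ∑ j ∈ K, F.mulVec x j = ∑ j ∈ K, ∑ i ∈ Kᶜ, F j i * x i := by
    have hs : ∑ j ∈ K, ∑ i ∈ K, F j i * x i = 0 := by
      rw [Finset.sum_comm]
      refine Finset.sum_eq_zero fun i hi => ?_
      rw [← Finset.sum_mul]
      have h2 := h0 i hi
      rw [← Finset.sum_add_sum_compl K,
        Finset.sum_eq_zero (s := Kᶜ) (fun k hk => h1 i hi k (Finset.mem_compl.1 hk)),
        add_zero] at h2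
      rw [h2, zero_mul]
    have : ∀ j, F.mulVec x j = ∑ i ∈ K, F j i * x i + ∑ i ∈ Kᶜ, F j i * x i := by
      intro j
      rw [Finset.sum_add_sum_compl]
      rfl
    simp only [this]
    rw [Finset.sum_add_distrib, hs, zero_add]
  refine ⟨key, ?_⟩
  rw [key]
  refine Finset.sum_nonneg fun j hj => Finset.sum_nonneg fun i hi => ?_
  refine mul_nonneg (hF.1 j i ?_) (hx i)
  rintro rfl
  exact Finset.mem_compl.1 hi hj

/-- if `K` is a trap of the compartmental matrix `F` and
`K ≠ {1,…,n}`, then for every `x ∈ [0,∞)^n`,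
`∑_{j∈K} (Fx)_j = ∑_{j∈K} ∑_{i∉K} F_{ji} x_i ≥ 0`; moreover, for any trap `K`,
every nonnegative solution of `q' = F q` on `[0,∞)` satisfies
`∑_{i∈K} q_i(t) ≥ ∑_{i∈K} q_i(0)` for all `t ≥ 0`. -/
theorem stmt5 (n : ℕ) (hn : 0 < n) (F : Matrix (Fin n) (Fin n) ℝ)
    (hF : IsCompartmental F) (K : Finset (Fin n)) (hK : IsTrap F K) :
    (K ≠ univ → ∀ x : Fin n → ℝ, (∀ i, 0 ≤ x i) →
      (∑ j ∈ K, F.mulVec x j = ∑ j ∈ K, ∑ i ∈ Kᶜ, F j i * x i) ∧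
      0 ≤ ∑ j ∈ K, F.mulVec x j) ∧
    ∀ q : ℝ → Fin n → ℝ,
      (∀ t ∈ Set.Ici (0 : ℝ), (∀ i, 0 ≤ q t i) ∧ HasDerivAt q (F.mulVec (q t)) t) →
      ∀ t ∈ Set.Ici (0 : ℝ), ∑ i ∈ K, q 0 i ≤ ∑ i ∈ K, q t i := by
  refine ⟨fun _ x hx => trap_sum F hF K hK x hx, ?_⟩
  intro q hq t ht
  have hd : ∀ s ∈ Set.Ici (0 : ℝ),
      HasDerivAt (fun s => ∑ i ∈ K, q s i) (∑ i ∈ K, F.mulVec (q s) i) s := by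
    intro s hs
    exact HasDerivAt.fun_sum fun i _ => (hasDerivAt_pi.1 (hq s hs).2) i
  have hm : MonotoneOn (fun s => ∑ i ∈ K, q s i) (Set.Ici (0 : ℝ)) := by
    refine monotoneOn_of_deriv_nonneg (convex_Ici 0)
      (fun s hs => (hd s hs).continuousAt.continuousWithinAt)
      (fun s hs => (hd s (interior_subset hs)).differentiableAt.differentiableWithinAt) ?_
    intro s hs
    have hs := interior_subset hs
    rw [(hd s hs).deriv]
    exact (trap_sum F hF K hK (q s) (hq s hs).1).2
  exact hm (Set.mem_Ici.2 le_rfl) ht ht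
end

section
/- Let 𝒳 ⊆ [0,∞)^n, let f : [0,∞) × ℝ^n → ℝ^n, and suppose there exist a vector v ∈ (0,∞)^n and a constant λ > 0 such that ⟨v, f(t,x)⟩ ≤ −λ⟨v, x⟩ for all t ≥ 0 and all x ∈ [0,∞)^n. Then every differentiable function x : [0,∞) → 𝒳 with x′(t) = f(t, x(t)) for all t ≥ 0 satisfies |x(t)|₁ ≤ γ e^{−λ t} |x(0)|₁ for all t ≥ 0, where γ = (max_i v_i)/(min_i v_i). -/
open Finset

/-- The `1`-norm `|x|₁ = ∑ i, |x i|` on `ℝⁿ`. -/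
def onenorm {n : ℕ} (x : Fin n → ℝ) : ℝ := ∑ i, |x i|

/-- if `⟨v, f(t,x)⟩ ≤ -λ ⟨v, x⟩` on `[0,∞) × [0,∞)^n` for some
`v ∈ (0,∞)^n` and `λ > 0`, then every solution of `x' = f(t,x)` staying in
`𝒳 ⊆ [0,∞)^n` satisfies `|x(t)|₁ ≤ γ e^{-λ t} |x(0)|₁` with
`γ = (max_i v_i)/(min_i v_i)`. -/
theorem stmt6 (n : ℕ) (hn : 0 < n) (X : Set (Fin n → ℝ))
    (hX : X ⊆ {x : Fin n → ℝ | ∀ i, 0 ≤ x i})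
    (f : ℝ → (Fin n → ℝ) → (Fin n → ℝ))
    (v : Fin n → ℝ) (hv : ∀ i, 0 < v i) (lam : ℝ) (hlam : 0 < lam)
    (hvf : ∀ t ≥ (0 : ℝ), ∀ x : Fin n → ℝ, (∀ i, 0 ≤ x i) →
      (∑ i, v i * f t x i) ≤ -lam * ∑ i, v i * x i)
    (x : ℝ → Fin n → ℝ)
    (hx : ∀ t ≥ (0 : ℝ), x t ∈ X ∧ HasDerivAt x (f t (x t)) t) :
    ∀ t ≥ (0 : ℝ), onenorm (x t) ≤
      ((univ.sup' ⟨⟨0, hn⟩, mem_univ _⟩ v) / (univ.inf' ⟨⟨0, hn⟩, mem_univ _⟩ v)) *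
        Real.exp (-lam * t) * onenorm (x 0) := by
  have hnn : ∀ t ≥ (0 : ℝ), ∀ i, 0 ≤ x t i := fun t ht => hX (hx t ht).1
  have hd : ∀ t ≥ (0 : ℝ), HasDerivAt (fun s => Real.exp (lam * s) * ∑ i, v i * x s i)
      (Real.exp (lam * t) * lam * (∑ i, v i * x t i) +
        Real.exp (lam * t) * ∑ i, v i * f t (x t) i) t := by
    intro t ht
    have h1 : HasDerivAt (fun s => ∑ i, v i * x s i) (∑ i, v i * f t (x t) i) t :=
      HasDerivAt.fun_sum fun i _ => ((hasDerivAt_pi.1 (hx t ht).2) i).const_mul (v i)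
    have h2 : HasDerivAt (fun s : ℝ => Real.exp (lam * s)) (Real.exp (lam * t) * lam) t := by
      have := ((hasDerivAt_id t).const_mul lam).exp
      simpa using this
    exact h2.mul h1
  have hanti : AntitoneOn (fun s => Real.exp (lam * s) * ∑ i, v i * x s i) (Set.Ici 0) := by
    apply antitoneOn_of_deriv_nonpos (convex_Ici 0)
    · exact fun t ht => (hd t ht).continuousAt.continuousWithinAt
    · intro t ht
      rw [interior_Ici] at ht
      exact (hd t (le_of_lt ht)).differentiableAt.differentiableWithinAt
    · intro t ht
      rw [interior_Ici] at ht
      have ht' : (0 : ℝ) ≤ t := le_of_lt ht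
      rw [(hd t ht').deriv]
      have := hvf t ht' (x t) (hnn t ht')
      nlinarith [Real.exp_pos (lam * t)]
  intro t ht
  have key := hanti (Set.mem_Ici.2 le_rfl) (Set.mem_Ici.2 ht) ht
  simp only [mul_zero, Real.exp_zero, one_mul] at key
  have hon : ∀ s ≥ (0 : ℝ), onenorm (x s) = ∑ i, x s i := fun s hs =>
    Finset.sum_congr rfl fun i _ => abs_of_nonneg (hnn s hs i)
  rw [hon t ht, hon 0 le_rfl]
  set M := univ.sup' ⟨⟨0, hn⟩, mem_univ _⟩ v with hM
  set m := univ.inf' ⟨⟨0, hn⟩, mem_univ _⟩ v with hm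
  have hmpos : 0 < m := by
    obtain ⟨i, _, hi⟩ := Finset.exists_mem_eq_inf' (s := univ) ⟨⟨0, hn⟩, mem_univ _⟩ v
    exact lt_of_lt_of_eq (hv i) hi.symm
  have hup : ∑ i, v i * x 0 i ≤ M * ∑ i, x 0 i := by
    rw [Finset.mul_sum]
    exact Finset.sum_le_sum fun i _ => mul_le_mul_of_nonneg_right
      (Finset.le_sup' v (mem_univ i)) (hnn 0 le_rfl i)
  have hlo : m * ∑ i, x t i ≤ ∑ i, v i * x t i := by
    rw [Finset.mul_sum]
    exact Finset.sum_le_sum fun i _ => mul_le_mul_of_nonneg_right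
      (Finset.inf'_le v (mem_univ i)) (hnn t ht i)
  have hE : Real.exp (-lam * t) * Real.exp (lam * t) = 1 := by
    rw [← Real.exp_add]; simp
  have h3 : Real.exp (lam * t) * (m * ∑ i, x t i) ≤ M * ∑ i, x 0 i :=
    (mul_le_mul_of_nonneg_left hlo (Real.exp_pos _).le).trans (key.trans hup)
  have h4 := mul_le_mul_of_nonneg_left h3 (Real.exp_pos (-lam * t)).le
  rw [← mul_assoc, hE, one_mul] at h4
  have h5 : M / m * Real.exp (-lam * t) * ∑ i, x 0 i
      = (Real.exp (-lam * t) * (M * ∑ i, x 0 i)) / m := by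
    ring
  rw [h5, le_div_iff₀ hmpos, mul_comm]
  exact h4
end

section
/- Let 𝒳 = 𝒳₁ × ⋯ × 𝒳ₙ ⊆ ℝⁿ be a product of n intervals (a box). Let f : [0,∞) × 𝒳 → ℝⁿ be continuous, Lipschitz continuous in its second argument uniformly in the first on compact sets, and such that x ↦ f(t,x) is type K on 𝒳 for each t ≥ 0. Fix 0 ≤ t₀ < t₁ and let x, y : [t₀,t₁] → 𝒳 be differentiable with x′(t) = f(t, x(t)) and y′(t) = f(t, y(t)) for all t ∈ [t₀,t₁]. If x(t₀) ≤ y(t₀) componentwise, then x(t) ≤ y(t) componentwise for all t ∈ [t₀,t₁]. -/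
open Finset

/-- A map `h` is type K on `D ⊆ ℝⁿ` if `h_i a ≤ h_i b` whenever `a, b ∈ D`
satisfy `a ≤ b` componentwise and `a_i = b_i`. -/
def IsTypeKOn {n : ℕ} (h : (Fin n → ℝ) → (Fin n → ℝ)) (D : Set (Fin n → ℝ)) : Prop :=
  ∀ a ∈ D, ∀ b ∈ D, a ≤ b → ∀ i, a i = b i → h a i ≤ h b i

theorem posPartSq_hasDerivAt (u : ℝ) :
    HasDerivAt (fun v : ℝ => (max v 0)^2) (2 * max u 0) u := by
  rw [hasDerivAt_iff_isLittleO]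
  have hb : (fun v : ℝ => (max v 0)^2 - (max u 0)^2 - (v - u) • (2 * max u 0))
      =O[nhds u] (fun v : ℝ => (v - u)^2) := by
    apply Asymptotics.IsBigO.of_bound 1
    filter_upwards with v
    rw [one_mul, Real.norm_eq_abs, Real.norm_eq_abs, abs_of_nonneg (sq_nonneg (v-u)), abs_le, smul_eq_mul]
    rcases le_total v 0 with h1 | h1 <;> rcases le_total u 0 with h2 | h2 <;>
      simp only [max_eq_left, max_eq_right, h1, h2] <;> constructor <;> nlinarith
  refine hb.trans_isLittleO ?_
  have h1 : (fun v : ℝ => v - u) =o[nhds u] (fun _ : ℝ => (1 : ℝ)) := by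
    rw [Asymptotics.isLittleO_one_iff]
    have : Filter.Tendsto (fun v : ℝ => v - u) (nhds u) (nhds (u - u)) :=
      (continuous_id.sub continuous_const).tendsto u
    simpa using this
  have h2 := (Asymptotics.isBigO_refl (fun v : ℝ => v - u) (nhds u)).mul_isLittleO h1
  simpa [pow_two] using h2

/-- for a system which is cooperative in a box (product of
intervals) `𝒳`, with `f` continuous, locally (on compact sets, uniformly in
time) Lipschitz in the state and type K in the state, initially ordered
solutions remain ordered on `[t₀, t₁]`. -/
theorem stmt8 (n : ℕ) (hn : 0 < n) (X : Fin n → Set ℝ)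
    (hX : ∀ i, (X i).OrdConnected)
    (box : Set (Fin n → ℝ)) (hbox : box = {x : Fin n → ℝ | ∀ i, x i ∈ X i})
    (f : ℝ → (Fin n → ℝ) → (Fin n → ℝ))
    (hcont : ContinuousOn (fun p : ℝ × (Fin n → ℝ) => f p.1 p.2) (Set.Ici 0 ×ˢ box))
    (hlip : ∀ K ⊆ box, IsCompact K → ∃ L : ℝ, ∀ t ≥ (0 : ℝ), ∀ x ∈ K, ∀ y ∈ K,
      ‖f t x - f t y‖ ≤ L * ‖x - y‖)
    (hK : ∀ t ≥ (0 : ℝ), IsTypeKOn (f t) box)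
    (t₀ t₁ : ℝ) (ht₀ : 0 ≤ t₀) (ht : t₀ < t₁)
    (x y : ℝ → Fin n → ℝ)
    (hxmem : ∀ t ∈ Set.Icc t₀ t₁, x t ∈ box)
    (hymem : ∀ t ∈ Set.Icc t₀ t₁, y t ∈ box)
    (hx : ∀ t ∈ Set.Icc t₀ t₁, HasDerivWithinAt x (f t (x t)) (Set.Icc t₀ t₁) t)
    (hy : ∀ t ∈ Set.Icc t₀ t₁, HasDerivWithinAt y (f t (y t)) (Set.Icc t₀ t₁) t)
    (h0 : x t₀ ≤ y t₀) :
    ∀ t ∈ Set.Icc t₀ t₁, x t ≤ y t := by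
  have hxc : ContinuousOn x (Set.Icc t₀ t₁) := fun t h => (hx t h).continuousWithinAt
  have hyc : ContinuousOn y (Set.Icc t₀ t₁) := fun t h => (hy t h).continuousWithinAt
  have hwmem : ∀ t ∈ Set.Icc t₀ t₁, x t ⊔ y t ∈ box := by
    intro t h
    have h1 := hxmem t h
    have h2 := hymem t h
    rw [hbox] at h1 h2 ⊢
    intro i
    rcases le_total (x t i) (y t i) with h3 | h3
    · simpa [Pi.sup_apply, h3] using h2 i
    · simpa [Pi.sup_apply, h3] using h1 i
  have hwc : ContinuousOn (fun t => x t ⊔ y t) (Set.Icc t₀ t₁) := by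
    rw [continuousOn_pi]
    intro i
    exact ((continuousOn_pi.1 hxc) i).sup ((continuousOn_pi.1 hyc) i)
  obtain ⟨L₀, hL₀⟩ := hlip ((fun t => x t ⊔ y t) '' Set.Icc t₀ t₁ ∪ y '' Set.Icc t₀ t₁)
    (by
      rintro _ (⟨t, h, rfl⟩ | ⟨t, h, rfl⟩)
      · exact hwmem t h
      · exact hymem t h)
    ((isCompact_Icc.image_of_continuousOn hwc).union (isCompact_Icc.image_of_continuousOn hyc))
  obtain ⟨L, hL0, hL⟩ : ∃ L : ℝ, 0 ≤ L ∧ ∀ t ∈ Set.Icc t₀ t₁,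
      ‖f t (x t ⊔ y t) - f t (y t)‖ ≤ L * ‖x t ⊔ y t - y t‖ := by
    refine ⟨max L₀ 0, le_max_right _ _, fun t h => ?_⟩
    refine (hL₀ t (ht₀.trans h.1) _ (Or.inl ⟨t, h, rfl⟩) _ (Or.inr ⟨t, h, rfl⟩)).trans ?_
    exact mul_le_mul_of_nonneg_right (le_max_left _ _) (norm_nonneg _)
  let p : ℝ → Fin n → ℝ := fun t i => max (x t i - y t i) 0
  have hp0 : ∀ t i, 0 ≤ p t i := fun t i => le_max_right _ _
  have hnorm : ∀ t, x t ⊔ y t - y t = p t := by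
    intro t
    funext i
    simp only [Pi.sub_apply, Pi.sup_apply, p]
    rw [← max_sub_sub_right, sub_self]
  have hder : ∀ t ∈ Set.Icc t₀ t₁, ∀ i,
      p t i * (f t (x t) i - f t (y t) i) ≤ L * ∑ j, p t j ^ 2 := by
    intro t h i
    have hS : ‖p t‖ ^ 2 ≤ ∑ j, p t j ^ 2 := by
      have hs0 : 0 ≤ ∑ j, p t j ^ 2 := Finset.sum_nonneg fun j _ => sq_nonneg _
      rw [← Real.le_sqrt (norm_nonneg _) hs0]
      rw [pi_norm_le_iff_of_nonneg (Real.sqrt_nonneg _)]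
      intro j
      rw [Real.norm_of_nonneg (hp0 t j)]
      apply Real.le_sqrt_of_sq_le
      exact Finset.single_le_sum (f := fun j => p t j ^ 2) (fun j _ => sq_nonneg _) (Finset.mem_univ j)
    rcases le_or_gt (x t i) (y t i) with h3 | h3
    · have : p t i = 0 := max_eq_right (by linarith)
      rw [this, zero_mul]
      exact mul_nonneg hL0 (Finset.sum_nonneg fun j _ => sq_nonneg _)
    · have h4 := hK t (ht₀.trans h.1) (x t) (hxmem t h) _ (hwmem t h) le_sup_left i
        (by simp [h3.le])
      have h5 := (norm_le_pi_norm (f t (x t ⊔ y t) - f t (y t)) i).trans (hL t h)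
      rw [hnorm, Real.norm_eq_abs, Pi.sub_apply] at h5
      have h6 := (le_abs_self _).trans h5
      have h7 : p t i ≤ ‖p t‖ := (le_abs_self _).trans (norm_le_pi_norm (p t) i)
      calc p t i * (f t (x t) i - f t (y t) i) ≤ p t i * (L * ‖p t‖) :=
            mul_le_mul_of_nonneg_left (by linarith) (hp0 t i)
        _ ≤ ‖p t‖ * (L * ‖p t‖) :=
            mul_le_mul_of_nonneg_right h7 (mul_nonneg hL0 (norm_nonneg _))
        _ = L * ‖p t‖ ^ 2 := by ring
        _ ≤ _ := mul_le_mul_of_nonneg_left hS hL0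
  let C : ℝ := 2 * n * L
  let S : ℝ → ℝ := fun t => ∑ j, p t j ^ 2
  have hSd : ∀ t ∈ Set.Icc t₀ t₁, HasDerivWithinAt S
      (∑ j, 2 * p t j * (f t (x t) j - f t (y t) j)) (Set.Icc t₀ t₁) t := by
    intro t h
    apply HasDerivWithinAt.fun_sum
    intro j _
    have h1 := ((hasDerivWithinAt_pi.1 (hx t h)) j).fun_sub ((hasDerivWithinAt_pi.1 (hy t h)) j)
    exact (posPartSq_hasDerivAt (x t j - y t j)).comp_hasDerivWithinAt t h1
  have hEd : ∀ t, HasDerivAt (fun s => Real.exp (-C * s)) (Real.exp (-C * t) * (-C)) t := by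
    intro t
    have := ((hasDerivAt_id t).const_mul (-C)).exp
    simpa using this
  have hgd : ∀ t ∈ Set.Icc t₀ t₁, HasDerivWithinAt (fun s => S s * Real.exp (-C * s)) _
      (Set.Icc t₀ t₁) t := fun t h => (hSd t h).fun_mul (hEd t).hasDerivWithinAt
  have hanti : AntitoneOn (fun s => S s * Real.exp (-C * s)) (Set.Icc t₀ t₁) := by
    apply antitoneOn_of_hasDerivWithinAt_nonpos (convex_Icc _ _)
      (fun t h => (hgd t h).continuousWithinAt)
      (fun t h => (hgd t (interior_subset h)).mono interior_subset)
    intro t h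
    have h := interior_subset h
    have h1 : (∑ j, 2 * p t j * (f t (x t) j - f t (y t) j)) ≤ C * S t := by
      calc _ ≤ ∑ j : Fin n, 2 * (L * S t) := by
            apply Finset.sum_le_sum
            intro j _
            have := hder t h j
            simp only [S]
            linarith
        _ = C * S t := by simp [C]; ring
    have h2 := Real.exp_pos (-C * t)
    nlinarith
  intro t h i
  have h1 := hanti (Set.left_mem_Icc.2 ht.le) h h.1
  have h2 : S t₀ = 0 := by
    apply Finset.sum_eq_zero
    intro j _
    have : p t₀ j = 0 := max_eq_right (by linarith [h0 j])
    simp [this]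
  simp only [h2, zero_mul] at h1
  have h3 : S t ≤ 0 := by
    by_contra h4
    push Not at h4
    have := mul_pos h4 (Real.exp_pos (-C * t))
    linarith
  have h4 : p t i ^ 2 ≤ S t :=
    Finset.single_le_sum (f := fun j => p t j ^ 2) (fun j _ => sq_nonneg _) (Finset.mem_univ i)
  have h5 : p t i = 0 := by
    have : p t i ^ 2 = 0 := le_antisymm (h4.trans h3) (sq_nonneg _)
    exact pow_eq_zero_iff (two_ne_zero) |>.1 this
  have h6 : x t i - y t i ≤ p t i := le_max_left _ _
  linarith
end

section
/- Let 𝒳 = 𝒳₁ × ⋯ × 𝒳ₙ ⊆ ℝⁿ be a product of n intervals (a box). For any a¹, a² ∈ 𝒳 define b¹, b² ∈ ℝⁿ by b¹_i = min{a¹_i, a²_i} and b²_i = max{a¹_i, a²_i}. Then: (1) b¹, b² ∈ 𝒳; (2) b¹ ≤ aᵏ ≤ b² componentwise for k = 1,2; (3) |a¹ − a²|₁ = |b¹ − b²|₁. Moreover, let f : [0,∞) × 𝒳 → ℝⁿ be continuous, Lipschitz continuous in its second argument uniformly in the first on compact sets, and such that x ↦ f(t,x) is type K on 𝒳 for each t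 ≥ 0; fix 0 ≤ t₀ < t₁ and let x¹, x², y¹, y² : [t₀,t₁] → 𝒳 be differentiable solutions of ż(t) = f(t, z(t)) with x¹(t₀) = a¹, x²(t₀) = a², y¹(t₀) = b¹, y²(t₀) = b². Then |x¹(t) − x²(t)|₁ ≤ |y¹(t) − y²(t)|₁ for all t ∈ [t₀,t₁]. -/
open Finset

theorem aux_deriv (x : ℝ) : HasDerivAt (fun y : ℝ => (max y 0)^2) (2 * max x 0) x := by
  rw [hasDerivAt_iff_isLittleO]
  have h1 : (fun y : ℝ => (max y 0)^2 - (max x 0)^2 - (y - x) • (2 * max x 0)) =O[nhds x]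
      (fun y => (y - x)^2) := by
    apply Asymptotics.IsBigO.of_bound 1
    refine Filter.Eventually.of_forall fun y => ?_
    rw [Real.norm_eq_abs, Real.norm_eq_abs, abs_of_nonneg (sq_nonneg (y - x)), abs_le, smul_eq_mul]
    rcases le_total y 0 with hy | hy <;> rcases le_total x 0 with hx | hx <;>
      simp only [hy, hx, max_eq_left, max_eq_right] <;> constructor <;>
      nlinarith [sq_nonneg (y - x), sq_nonneg x, sq_nonneg y,
        mul_nonneg (sub_nonneg.2 hx) (sub_nonneg.2 hy)]
  refine h1.trans_isLittleO ?_
  have h2 := (Asymptotics.isLittleO_pow_id (𝕜 := ℝ) (n := 2) (by norm_num))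
  have h3 : Filter.Tendsto (fun y : ℝ => y - x) (nhds x) (nhds 0) := by
    have : Continuous (fun y : ℝ => y - x) := by fun_prop
    simpa using this.tendsto x
  exact h2.comp_tendsto h3

theorem aux_cmp (n : ℕ) (X : Fin n → Set ℝ)
    (hX : ∀ i, (X i).OrdConnected)
    (box : Set (Fin n → ℝ)) (hbox : box = {x : Fin n → ℝ | ∀ i, x i ∈ X i})
    (f : ℝ → (Fin n → ℝ) → (Fin n → ℝ))
    (hlip : ∀ K ⊆ box, IsCompact K → ∃ L : ℝ, ∀ t ≥ (0 : ℝ), ∀ x ∈ K, ∀ y ∈ K,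
      ‖f t x - f t y‖ ≤ L * ‖x - y‖)
    (hK : ∀ t ≥ (0 : ℝ), IsTypeKOn (f t) box)
    (t₀ t₁ : ℝ) (ht₀ : 0 ≤ t₀) (ht : t₀ < t₁)
    (u v : ℝ → Fin n → ℝ)
    (hum : ∀ t ∈ Set.Icc t₀ t₁, u t ∈ box)
    (hvm : ∀ t ∈ Set.Icc t₀ t₁, v t ∈ box)
    (hu : ∀ t ∈ Set.Icc t₀ t₁, HasDerivWithinAt u (f t (u t)) (Set.Icc t₀ t₁) t)
    (hv : ∀ t ∈ Set.Icc t₀ t₁, HasDerivWithinAt v (f t (v t)) (Set.Icc t₀ t₁) t)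
    (h0 : u t₀ ≤ v t₀) : ∀ t ∈ Set.Icc t₀ t₁, u t ≤ v t := by
  have huc : ContinuousOn u (Set.Icc t₀ t₁) := fun t h => (hu t h).continuousWithinAt
  have hvc : ContinuousOn v (Set.Icc t₀ t₁) := fun t h => (hv t h).continuousWithinAt
  have huci : ∀ i, ContinuousOn (fun t => u t i) (Set.Icc t₀ t₁) := fun i =>
    (continuous_apply i).comp_continuousOn huc
  have hvci : ∀ i, ContinuousOn (fun t => v t i) (Set.Icc t₀ t₁) := fun i =>
    (continuous_apply i).comp_continuousOn hvc
  have hne : (Set.Icc t₀ t₁).Nonempty := ⟨t₀, by simp [ht.le]⟩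
  have hmn : ∀ i, ∃ m ∈ X i, ∀ t ∈ Set.Icc t₀ t₁, m ≤ u t i ∧ m ≤ v t i := by
    intro i
    obtain ⟨s, hs, hs'⟩ := isCompact_Icc.exists_isMinOn hne (huci i)
    obtain ⟨r, hr, hr'⟩ := isCompact_Icc.exists_isMinOn hne (hvci i)
    have h1 := hum s hs
    have h2 := hvm r hr
    rw [hbox] at h1 h2
    refine ⟨min (u s i) (v r i), ?_, fun t h => ⟨(min_le_left _ _).trans (hs' h), (min_le_right _ _).trans (hr' h)⟩⟩
    rcases min_choice (u s i) (v r i) with h | h <;> rw [h]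
    exacts [h1 i, h2 i]
  have hmx : ∀ i, ∃ m ∈ X i, ∀ t ∈ Set.Icc t₀ t₁, u t i ≤ m ∧ v t i ≤ m := by
    intro i
    obtain ⟨s, hs, hs'⟩ := isCompact_Icc.exists_isMaxOn hne (huci i)
    obtain ⟨r, hr, hr'⟩ := isCompact_Icc.exists_isMaxOn hne (hvci i)
    have h1 := hum s hs
    have h2 := hvm r hr
    rw [hbox] at h1 h2
    refine ⟨max (u s i) (v r i), ?_, fun t h => ⟨(hs' h).trans (le_max_left _ _), (hr' h).trans (le_max_right _ _)⟩⟩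
    rcases max_choice (u s i) (v r i) with h | h <;> rw [h]
    exacts [h1 i, h2 i]
  choose m hmX hm using hmn
  choose M hMX hM using hmx
  have hKb : Set.Icc m M ⊆ box := by
    intro x hx
    rw [hbox]
    exact fun i => (hX i).out (hmX i) (hMX i) ⟨hx.1 i, hx.2 i⟩
  obtain ⟨L, hL⟩ := hlip (Set.Icc m M) hKb isCompact_Icc
  have huK : ∀ t ∈ Set.Icc t₀ t₁, u t ∈ Set.Icc m M := fun t h =>
    ⟨fun i => (hm i t h).1, fun i => (hM i t h).1⟩
  have hvK : ∀ t ∈ Set.Icc t₀ t₁, v t ∈ Set.Icc m M := fun t h =>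
    ⟨fun i => (hm i t h).2, fun i => (hM i t h).2⟩
  set S : ℝ → ℝ := fun t => ∑ i, (max (u t i - v t i) 0)^2 with hS
  have hS0 : S t₀ = 0 := by
    apply Finset.sum_eq_zero
    intro i _
    rw [max_eq_right (sub_nonpos.2 (h0 i))]; norm_num
  have hSnn : ∀ t, 0 ≤ S t := fun t => Finset.sum_nonneg fun i _ => sq_nonneg _
  -- key bound
  have key : ∀ t ∈ Set.Icc t₀ t₁, ∀ i,
      2 * max (u t i - v t i) 0 * (f t (u t) i - f t (v t) i) ≤ 2 * |L| * S t := by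
    intro t h i
    have htn : 0 ≤ t := ht₀.trans h.1
    have hR : 0 ≤ 2 * |L| * S t := mul_nonneg (by positivity) (hSnn t)
    rcases le_or_gt (u t i) (v t i) with hi | hi
    · rw [max_eq_right (sub_nonpos.2 hi)]; simpa using hR
    · have hwK : u t ⊔ v t ∈ Set.Icc m M :=
        ⟨(huK t h).1.trans le_sup_left, sup_le (huK t h).2 (hvK t h).2⟩
      have e1 : f t (u t) i ≤ f t (u t ⊔ v t) i := by
        apply hK t htn _ (hum t h) _ (hKb hwK) le_sup_left
        simp [hi.le]
      have e2 := hL t htn _ hwK _ (hvK t h)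
      have e3 : f t (u t ⊔ v t) i - f t (v t) i ≤ ‖f t (u t ⊔ v t) - f t (v t)‖ :=
        (le_abs_self _).trans (norm_le_pi_norm (f t (u t ⊔ v t) - f t (v t)) i)
      have e4 : ‖u t ⊔ v t - v t‖ ≤ √(S t) := by
        rw [pi_norm_le_iff_of_nonneg (Real.sqrt_nonneg _)]
        intro j
        apply Real.le_sqrt_of_sq_le
        have : (u t ⊔ v t - v t) j = max (u t j - v t j) 0 := by
          simp [max_sub_sub_right, ← max_sub_sub_right]
        rw [this, Real.norm_eq_abs, sq_abs]
        exact Finset.single_le_sum (f := fun j => (max (u t j - v t j) 0)^2)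
          (fun j _ => sq_nonneg _) (Finset.mem_univ j)
      have e5 : max (u t i - v t i) 0 ≤ √(S t) := by
        apply Real.le_sqrt_of_sq_le
        exact Finset.single_le_sum (f := fun j => (max (u t j - v t j) 0)^2)
          (fun j _ => sq_nonneg _) (Finset.mem_univ i)
      have e6 : L * ‖u t ⊔ v t - v t‖ ≤ |L| * √(S t) :=
        mul_le_mul (le_abs_self L) e4 (norm_nonneg _) (abs_nonneg _)
      have e7 : f t (u t) i - f t (v t) i ≤ |L| * √(S t) := by linarith
      have e8 : max (u t i - v t i) 0 * (f t (u t) i - f t (v t) i) ≤ √(S t) * (|L| * √(S t)) :=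
        (mul_le_mul_of_nonneg_left e7 (le_max_right _ _)).trans
          (mul_le_mul_of_nonneg_right e5 (by positivity))
      have e9 := Real.mul_self_sqrt (hSnn t)
      have e10 : √(S t) * (|L| * √(S t)) = |L| * S t := by rw [← e9]; ring_nf; rw [Real.sqrt_sq (Real.sqrt_nonneg _)]
      nlinarith
  set C : ℝ := n * (2 * |L|) with hC
  have hder : ∀ t ∈ Set.Ioo t₀ t₁, HasDerivAt S
      (∑ i, 2 * max (u t i - v t i) 0 * (f t (u t) i - f t (v t) i)) t := by
    intro t h
    have hn := Icc_mem_nhds h.1 h.2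
    have a := hasDerivAt_pi.1 ((hu t ⟨h.1.le, h.2.le⟩).hasDerivAt hn)
    have b := hasDerivAt_pi.1 ((hv t ⟨h.1.le, h.2.le⟩).hasDerivAt hn)
    apply HasDerivAt.fun_sum
    intro i _
    exact (aux_deriv (u t i - v t i)).comp t ((a i).sub (b i))
  have hanti : AntitoneOn (fun t => S t * Real.exp (-(C * t))) (Set.Icc t₀ t₁) := by
    have hd : ∀ t ∈ Set.Ioo t₀ t₁, HasDerivAt (fun t => S t * Real.exp (-(C * t))) _ t := fun t h =>
      (hder t h).mul (((hasDerivAt_id t).const_mul C).neg.exp)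
    apply antitoneOn_of_deriv_nonpos (convex_Icc _ _)
    · have : ContinuousOn S (Set.Icc t₀ t₁) := by
        apply continuousOn_finsetSum
        intro i _
        exact (ContinuousOn.sup ((huci i).sub (hvci i)) continuousOn_const).pow 2
      exact this.mul (by fun_prop)
    · rw [interior_Icc]
      exact fun t h => (hd t h).differentiableAt.differentiableWithinAt
    · rw [interior_Icc]
      intro t h
      rw [(hd t h).deriv]
      have : ∑ i, 2 * max (u t i - v t i) 0 * (f t (u t) i - f t (v t) i) ≤ C * S t := by
        refine (Finset.sum_le_sum fun i _ => key t ⟨h.1.le, h.2.le⟩ i).trans ?_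
        simp [hC]; linarith
      have hp := Real.exp_pos (-(C * t))
      simp only [id, mul_one, Pi.neg_apply]
      nlinarith
  intro t h i
  have h2 := hanti ⟨le_rfl, ht.le⟩ h h.1
  simp only [hS0, zero_mul] at h2
  have h3 : S t ≤ 0 := by
    by_contra hc
    push Not at hc
    exact absurd h2 (not_le.2 (mul_pos hc (Real.exp_pos _)))
  have h4 : (max (u t i - v t i) 0)^2 ≤ S t :=
    Finset.single_le_sum (f := fun j => (max (u t j - v t j) 0)^2)
      (fun j _ => sq_nonneg _) (Finset.mem_univ i)
  have h5 : max (u t i - v t i) 0 = 0 := pow_eq_zero_iff (two_ne_zero) |>.1 (le_antisymm (h4.trans h3) (sq_nonneg _))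
  have := le_max_left (u t i - v t i) 0
  linarith

/-- for points `a¹, a² ∈ 𝒳` (a box) and `b¹_i = min (a¹_i) (a²_i)`,
`b²_i = max (a¹_i) (a²_i)`: (1) `b¹, b² ∈ 𝒳`; (2) `b¹ ≤ aᵏ ≤ b²`;
(3) `|a¹ - a²|₁ = |b¹ - b²|₁`; moreover, for solutions of a system cooperative
in `𝒳` started respectively at `a¹, a², b¹, b²` at time `t₀`,
`|x¹(t) - x²(t)|₁ ≤ |y¹(t) - y²(t)|₁` on `[t₀, t₁]`. -/
theorem stmt9 (n : ℕ) (hn : 0 < n) (X : Fin n → Set ℝ)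
    (hX : ∀ i, (X i).OrdConnected)
    (box : Set (Fin n → ℝ)) (hbox : box = {x : Fin n → ℝ | ∀ i, x i ∈ X i})
    (a₁ a₂ : Fin n → ℝ) (ha₁ : a₁ ∈ box) (ha₂ : a₂ ∈ box)
    (b₁ b₂ : Fin n → ℝ)
    (hb₁ : b₁ = fun i => min (a₁ i) (a₂ i)) (hb₂ : b₂ = fun i => max (a₁ i) (a₂ i))
    (f : ℝ → (Fin n → ℝ) → (Fin n → ℝ))
    (hcont : ContinuousOn (fun p : ℝ × (Fin n → ℝ) => f p.1 p.2) (Set.Ici 0 ×ˢ box))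
    (hlip : ∀ K ⊆ box, IsCompact K → ∃ L : ℝ, ∀ t ≥ (0 : ℝ), ∀ x ∈ K, ∀ y ∈ K,
      ‖f t x - f t y‖ ≤ L * ‖x - y‖)
    (hK : ∀ t ≥ (0 : ℝ), IsTypeKOn (f t) box)
    (t₀ t₁ : ℝ) (ht₀ : 0 ≤ t₀) (ht : t₀ < t₁)
    (x₁ x₂ y₁ y₂ : ℝ → Fin n → ℝ)
    (hx₁mem : ∀ t ∈ Set.Icc t₀ t₁, x₁ t ∈ box)
    (hx₂mem : ∀ t ∈ Set.Icc t₀ t₁, x₂ t ∈ box)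
    (hy₁mem : ∀ t ∈ Set.Icc t₀ t₁, y₁ t ∈ box)
    (hy₂mem : ∀ t ∈ Set.Icc t₀ t₁, y₂ t ∈ box)
    (hx₁ : ∀ t ∈ Set.Icc t₀ t₁, HasDerivWithinAt x₁ (f t (x₁ t)) (Set.Icc t₀ t₁) t)
    (hx₂ : ∀ t ∈ Set.Icc t₀ t₁, HasDerivWithinAt x₂ (f t (x₂ t)) (Set.Icc t₀ t₁) t)
    (hy₁ : ∀ t ∈ Set.Icc t₀ t₁, HasDerivWithinAt y₁ (f t (y₁ t)) (Set.Icc t₀ t₁) t)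
    (hy₂ : ∀ t ∈ Set.Icc t₀ t₁, HasDerivWithinAt y₂ (f t (y₂ t)) (Set.Icc t₀ t₁) t)
    (hix₁ : x₁ t₀ = a₁) (hix₂ : x₂ t₀ = a₂) (hiy₁ : y₁ t₀ = b₁) (hiy₂ : y₂ t₀ = b₂) :
    b₁ ∈ box ∧ b₂ ∈ box ∧
    (b₁ ≤ a₁ ∧ a₁ ≤ b₂) ∧ (b₁ ≤ a₂ ∧ a₂ ≤ b₂) ∧
    onenorm (a₁ - a₂) = onenorm (b₁ - b₂) ∧
    ∀ t ∈ Set.Icc t₀ t₁, onenorm (x₁ t - x₂ t) ≤ onenorm (y₁ t - y₂ t) := by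
  have hb1 : b₁ ≤ a₁ := by rw [hb₁]; exact fun i => min_le_left _ _
  have hb2 : b₁ ≤ a₂ := by rw [hb₁]; exact fun i => min_le_right _ _
  have hb3 : a₁ ≤ b₂ := by rw [hb₂]; exact fun i => le_max_left _ _
  have hb4 : a₂ ≤ b₂ := by rw [hb₂]; exact fun i => le_max_right _ _
  have cmp := aux_cmp n X hX box hbox f hlip hK t₀ t₁ ht₀ ht
  refine ⟨?_, ?_, ⟨hb1, hb3⟩, ⟨hb2, hb4⟩, ?_, ?_⟩
  · rw [← hiy₁]; exact hy₁mem _ ⟨le_rfl, ht.le⟩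
  · rw [← hiy₂]; exact hy₂mem _ ⟨le_rfl, ht.le⟩
  · unfold onenorm
    apply Finset.sum_congr rfl
    intro i _
    simp only [hb₁, hb₂, Pi.sub_apply]
    rw [abs_sub_comm (min _ _), max_sub_min_eq_abs, abs_abs, abs_sub_comm]
  · intro t h
    have c1 := cmp y₁ x₁ hy₁mem hx₁mem hy₁ hx₁ (by rw [hiy₁, hix₁]; exact hb1) t h
    have c2 := cmp y₁ x₂ hy₁mem hx₂mem hy₁ hx₂ (by rw [hiy₁, hix₂]; exact hb2) t h
    have c3 := cmp x₁ y₂ hx₁mem hy₂mem hx₁ hy₂ (by rw [hiy₂, hix₁]; exact hb3) t h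
    have c4 := cmp x₂ y₂ hx₂mem hy₂mem hx₂ hy₂ (by rw [hiy₂, hix₂]; exact hb4) t h
    apply Finset.sum_le_sum
    intro i _
    simp only [Pi.sub_apply]
    have := c1 i
    have := c2 i
    have := c3 i
    have := c4 i
    rw [abs_sub_comm (y₁ t i), abs_of_nonneg (a := y₂ t i - y₁ t i) (by linarith), abs_le]
    constructor <;> linarith
end

section
/- Let 𝒳 = 𝒳₁ × ⋯ × 𝒳ₙ ⊆ ℝⁿ be a product of n intervals (a box), and let f : [0,∞) × 𝒳 → ℝⁿ be continuous, Lipschitz continuous in its second argument uniformly in the first on compact sets, and such that x ↦ f(t,x) is type K on 𝒳 for each t ≥ 0. Suppose there is a map φ : [0,∞) × 𝒳 → 𝒳 such that for every ξ ∈ 𝒳, φ(0,ξ) = ξ and t ↦ φ(t,ξ) is differentiable with ∂_t φ(t,ξ) = f(t, φ(t,ξ)) for all t ≥ 0. Then there exists β ∈ 𝒦ℒ with |φ(t,ξ¹) − φ(t,ξ²)|₁ ≤ β(|ξ¹ − ξ²|₁, t) for all ξ¹, ξ² ∈ 𝒳 and all t ≥ 0 (incremental asymptotic stability with respect to 𝒳)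 if and only if there exists β ∈ 𝒦ℒ such that for every pair ξ¹, ξ² ∈ 𝒳 with ξ¹ ≤ ξ² componentwise and every t ≥ 0, ∑_{i=1}^n (φ_i(t,ξ²) − φ_i(t,ξ¹)) ≤ β(∑_{i=1}^n (ξ²_i − ξ¹_i), t). -/
open Finset

/-- The class `𝒦ℒ` of comparison functions: `β : [0,∞) × [0,∞) → [0,∞)` is
continuous, `β 0 t = 0`, `r ↦ β r t` is strictly increasing for each fixed `t`,
and `β r t → 0` as `t → ∞` for each fixed `r`. -/
def IsKL (β : ℝ → ℝ → ℝ) : Prop :=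
  ContinuousOn (fun p : ℝ × ℝ => β p.1 p.2) (Set.Ici 0 ×ˢ Set.Ici 0) ∧
  (∀ r ∈ Set.Ici (0 : ℝ), ∀ t ∈ Set.Ici (0 : ℝ), 0 ≤ β r t) ∧
  (∀ t ∈ Set.Ici (0 : ℝ), β 0 t = 0) ∧
  (∀ t ∈ Set.Ici (0 : ℝ), StrictMonoOn (fun r => β r t) (Set.Ici 0)) ∧
  (∀ r ∈ Set.Ici (0 : ℝ), Filter.Tendsto (fun t => β r t) Filter.atTop (nhds 0))

theorem hasDerivAt_pos_sq (s : ℝ) :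
    HasDerivAt (fun s : ℝ => (max s 0) ^ 2) (2 * max s 0) s := by
  rcases lt_trichotomy s 0 with h | h | h
  · rw [max_eq_right h.le, mul_zero]
    refine (hasDerivAt_const s (0 : ℝ)).congr_of_eventuallyEq ?_
    filter_upwards [Iio_mem_nhds h] with u hu
    rw [max_eq_right (le_of_lt hu)]; norm_num
  · subst h
    rw [hasDerivAt_iff_isLittleO]
    have h1 : (fun x : ℝ => x ^ 2) =o[nhds 0] fun x : ℝ => x := by
      simpa using Asymptotics.isLittleO_pow_pow (𝕜 := ℝ) (m := 1) (n := 2) (by norm_num)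
    refine (Asymptotics.IsBigO.of_bound 1 ?_).trans_isLittleO (by simpa using h1)
    filter_upwards with x
    simp only [max_self, mul_zero, smul_zero, sub_zero, Real.norm_eq_abs, one_mul]
    rcases le_total x 0 with hx | hx
    · simp [max_eq_right hx]
      positivity
    · simp [max_eq_left hx]
  · rw [max_eq_left h.le]
    have := hasDerivAt_pow 2 s
    refine HasDerivAt.congr_of_eventuallyEq (f := fun x => x ^ 2) (by simpa using this) ?_
    filter_upwards [Ioi_mem_nhds h] with u hu
    rw [max_eq_left (le_of_lt hu)]

theorem kamke_aux {n : ℕ} (X : Fin n → Set ℝ)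
    (hX : ∀ i, (X i).OrdConnected)
    (box : Set (Fin n → ℝ)) (hbox : box = {x : Fin n → ℝ | ∀ i, x i ∈ X i})
    (f : ℝ → (Fin n → ℝ) → (Fin n → ℝ))
    (hlip : ∀ K ⊆ box, IsCompact K → ∃ L : ℝ, ∀ t ≥ (0 : ℝ), ∀ x ∈ K, ∀ y ∈ K,
      ‖f t x - f t y‖ ≤ L * ‖x - y‖)
    (hK : ∀ t ≥ (0 : ℝ), IsTypeKOn (f t) box)
    (x y : ℝ → (Fin n → ℝ))
    (hx : ∀ t ≥ (0 : ℝ), x t ∈ box) (hy : ∀ t ≥ (0 : ℝ), y t ∈ box)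
    (dx : ∀ t ≥ (0 : ℝ), HasDerivAt x (f t (x t)) t)
    (dy : ∀ t ≥ (0 : ℝ), HasDerivAt y (f t (y t)) t)
    (h0 : x 0 ≤ y 0) : ∀ t ≥ (0 : ℝ), x t ≤ y t := by
  intro T hT
  have dxi := fun t ht => hasDerivAt_pi.1 (dx t ht)
  have dyi := fun t ht => hasDerivAt_pi.1 (dy t ht)
  have cx : ∀ i, ContinuousOn (fun t => x t i) (Set.Icc 0 T) := fun i t ht =>
    (dxi t ht.1 i).continuousAt.continuousWithinAt
  have cy : ∀ i, ContinuousOn (fun t => y t i) (Set.Icc 0 T) := fun i t ht =>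
    (dyi t ht.1 i).continuousAt.continuousWithinAt
  have hne : (Set.Icc 0 T).Nonempty := ⟨0, le_rfl, hT⟩
  have hm : ∀ i, ∃ m ∈ X i, ∀ t ∈ Set.Icc 0 T, m ≤ min (x t i) (y t i) := by
    intro i
    obtain ⟨s, hs, hmin⟩ := isCompact_Icc.exists_isMinOn hne ((cx i).inf (cy i))
    refine ⟨min (x s i) (y s i), ?_, fun t ht => hmin ht⟩
    have a1 := hx s hs.1
    have a2 := hy s hs.1
    rw [hbox] at a1 a2
    rcases min_choice (x s i) (y s i) with h | h <;> rw [h]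
    exacts [a1 i, a2 i]
  have hM : ∀ i, ∃ m ∈ X i, ∀ t ∈ Set.Icc 0 T, max (x t i) (y t i) ≤ m := by
    intro i
    obtain ⟨s, hs, hmax⟩ := isCompact_Icc.exists_isMaxOn hne ((cx i).sup (cy i))
    refine ⟨max (x s i) (y s i), ?_, fun t ht => hmax ht⟩
    have a1 := hx s hs.1
    have a2 := hy s hs.1
    rw [hbox] at a1 a2
    rcases max_choice (x s i) (y s i) with h | h <;> rw [h]
    exacts [a1 i, a2 i]
  choose m hmX hm using hm
  choose M hMX hM using hM
  have hsub : Set.Icc m M ⊆ box := by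
    intro z hz
    rw [hbox]
    intro i
    exact (hX i).out (hmX i) (hMX i) ⟨hz.1 i, hz.2 i⟩
  obtain ⟨L, hL⟩ := hlip _ hsub isCompact_Icc
  set V : ℝ → ℝ := fun t => ∑ i, (max (x t i - y t i) 0) ^ 2 with hV
  set V' : ℝ → ℝ := fun t =>
    ∑ i, (2 * max (x t i - y t i) 0) * (f t (x t) i - f t (y t) i) with hV'
  have dV : ∀ t ≥ (0 : ℝ), HasDerivAt V (V' t) t := by
    intro t ht
    refine HasDerivAt.fun_sum fun i _ => ?_
    exact (hasDerivAt_pos_sq (x t i - y t i)).comp t ((dxi t ht i).sub (dyi t ht i))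
  set C : ℝ := 2 * (n * |L|) with hC
  have hVle : ∀ t ∈ Set.Icc 0 T, V' t ≤ C * V t := by
    intro t ht
    have hxI : x t ∈ Set.Icc m M :=
      ⟨fun i => (le_min_iff.1 (hm i t ht)).1, fun i => (max_le_iff.1 (hM i t ht)).1⟩
    have hyI : y t ∈ Set.Icc m M :=
      ⟨fun i => (le_min_iff.1 (hm i t ht)).2, fun i => (max_le_iff.1 (hM i t ht)).2⟩
    have hzI : x t ⊔ y t ∈ Set.Icc m M :=
      ⟨le_sup_of_le_left hxI.1, sup_le hxI.2 hyI.2⟩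
    set N := ‖x t ⊔ y t - y t‖ with hN
    have hNV : N ^ 2 ≤ V t := by
      have : N ≤ √(V t) := by
        refine (pi_norm_le_iff_of_nonneg (Real.sqrt_nonneg _)).2 fun i => ?_
        have e : (x t ⊔ y t - y t) i = max (x t i - y t i) 0 := by
          simp only [Pi.sub_apply, Pi.sup_apply]
          change max (x t i) (y t i) - y t i = _
          rw [← max_sub_sub_right, sub_self]
        rw [e, Real.norm_eq_abs]
        refine Real.abs_le_sqrt ?_
        exact Finset.single_le_sum (f := fun i => (max (x t i - y t i) 0) ^ 2)
          (fun j _ => sq_nonneg _) (Finset.mem_univ i)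
      have hV0 : 0 ≤ V t := Finset.sum_nonneg fun j _ => sq_nonneg _
      calc N ^ 2 ≤ (√(V t)) ^ 2 := by gcongr
        _ = V t := Real.sq_sqrt hV0
    have hterm : ∀ i, (2 * max (x t i - y t i) 0) * (f t (x t) i - f t (y t) i)
        ≤ 2 * |L| * V t := by
      intro i
      have hV0 : 0 ≤ V t := Finset.sum_nonneg fun j _ => sq_nonneg _
      rcases le_total (x t i) (y t i) with h | h
      · rw [max_eq_right (by linarith)]
        have : 0 ≤ 2 * |L| * V t := by positivity
        linarith
      · have k1 := hK t ht.1 _ (hx t ht.1) _ (hsub hzI) le_sup_left i (by simp [h])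
        have k2 := hL t ht.1 _ hzI _ hyI
        have k3 := norm_le_pi_norm (f t (x t ⊔ y t) - f t (y t)) i
        rw [Real.norm_eq_abs, Pi.sub_apply] at k3
        have k4 := le_abs_self (f t (x t ⊔ y t) i - f t (y t) i)
        have k5 : L * N ≤ |L| * N := by
          gcongr; exact le_abs_self L
        have k6 : f t (x t) i - f t (y t) i ≤ |L| * N := by linarith
        have k7 : max (x t i - y t i) 0 ≤ N := by
          have := norm_le_pi_norm (x t ⊔ y t - y t) i
          rw [Real.norm_eq_abs, Pi.sub_apply, Pi.sup_apply] at this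
          rw [← hN] at this
          rw [max_eq_left (by linarith)]
          have h' : x t i ⊔ y t i = x t i := max_eq_left h
          rw [h'] at this
          exact (le_abs_self _).trans this
        have k8 : 0 ≤ max (x t i - y t i) 0 := le_max_right _ _
        have k9 : 0 ≤ |L| * N := by positivity
        calc (2 * max (x t i - y t i) 0) * (f t (x t) i - f t (y t) i)
            ≤ (2 * max (x t i - y t i) 0) * (|L| * N) := by gcongr
          _ ≤ (2 * N) * (|L| * N) := by gcongr
          _ = 2 * |L| * N ^ 2 := by ring
          _ ≤ 2 * |L| * V t := by gcongr
    calc V' t ≤ ∑ _i : Fin n, 2 * |L| * V t := Finset.sum_le_sum fun i _ => hterm i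
      _ = C * V t := by simp [hC]; ring
  have dW : ∀ t ≥ (0 : ℝ), HasDerivAt (fun s => V s * Real.exp (-C * s))
      (V' t * Real.exp (-C * t) + V t * (Real.exp (-C * t) * (-C))) t := by
    intro t ht
    refine (dV t ht).mul ?_
    simpa using ((hasDerivAt_id t).const_mul (-C)).exp
  have hanti : AntitoneOn (fun s => V s * Real.exp (-C * s)) (Set.Icc 0 T) := by
    refine antitoneOn_of_deriv_nonpos (convex_Icc 0 T)
      (fun t ht => (dW t ht.1).continuousAt.continuousWithinAt)
      (fun t ht => ?_) (fun t ht => ?_)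
    · rw [interior_Icc] at ht
      exact (dW t ht.1.le).differentiableAt.differentiableWithinAt
    · rw [interior_Icc] at ht
      rw [(dW t ht.1.le).deriv]
      have := hVle t ⟨ht.1.le, ht.2.le⟩
      have he := Real.exp_pos (-C * t)
      nlinarith
  have hV00 : V 0 = 0 := by
    refine Finset.sum_eq_zero fun i _ => ?_
    rw [max_eq_right (sub_nonpos.2 (h0 i))]; norm_num
  have hfin := hanti ⟨le_rfl, hT⟩ ⟨hT, le_rfl⟩ hT
  simp only [hV00, zero_mul] at hfin
  have hVT : V T ≤ 0 := by
    by_contra hcon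
    push Not at hcon
    have := mul_pos hcon (Real.exp_pos (-C * T))
    linarith
  intro i
  have h1 : (max (x T i - y T i) 0) ^ 2 ≤ V T :=
    Finset.single_le_sum (f := fun i => (max (x T i - y T i) 0) ^ 2)
      (fun j _ => sq_nonneg _) (Finset.mem_univ i)
  have h2 : max (x T i - y T i) 0 = 0 := by
    have : (max (x T i - y T i) 0) ^ 2 = 0 := le_antisymm (h1.trans hVT) (sq_nonneg _)
    exact pow_eq_zero_iff (two_ne_zero) |>.1 this
  have := le_max_left (x T i - y T i) 0
  linarith

/-- a system cooperative in a box `𝒳` with flow `φ` is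
incrementally asymptotically stable with respect to `𝒳` if and only if there is
a `𝒦ℒ` bound on all pairs of initially ordered solutions. -/
theorem stmt10 (n : ℕ) (hn : 0 < n) (X : Fin n → Set ℝ)
    (hX : ∀ i, (X i).OrdConnected)
    (box : Set (Fin n → ℝ)) (hbox : box = {x : Fin n → ℝ | ∀ i, x i ∈ X i})
    (f : ℝ → (Fin n → ℝ) → (Fin n → ℝ))
    (hcont : ContinuousOn (fun p : ℝ × (Fin n → ℝ) => f p.1 p.2) (Set.Ici 0 ×ˢ box))
    (hlip : ∀ K ⊆ box, IsCompact K → ∃ L : ℝ, ∀ t ≥ (0 : ℝ), ∀ x ∈ K, ∀ y ∈ K,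
      ‖f t x - f t y‖ ≤ L * ‖x - y‖)
    (hK : ∀ t ≥ (0 : ℝ), IsTypeKOn (f t) box)
    (φ : ℝ → (Fin n → ℝ) → (Fin n → ℝ))
    (hφ : ∀ ξ ∈ box, φ 0 ξ = ξ ∧ ∀ t ≥ (0 : ℝ), φ t ξ ∈ box ∧
      HasDerivAt (fun s => φ s ξ) (f t (φ t ξ)) t) :
    (∃ β : ℝ → ℝ → ℝ, IsKL β ∧ ∀ ξ₁ ∈ box, ∀ ξ₂ ∈ box, ∀ t ≥ (0 : ℝ),
        onenorm (φ t ξ₁ - φ t ξ₂) ≤ β (onenorm (ξ₁ - ξ₂)) t) ↔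
    (∃ β : ℝ → ℝ → ℝ, IsKL β ∧ ∀ ξ₁ ∈ box, ∀ ξ₂ ∈ box, ξ₁ ≤ ξ₂ → ∀ t ≥ (0 : ℝ),
        (∑ i, (φ t ξ₂ i - φ t ξ₁ i)) ≤ β (∑ i, (ξ₂ i - ξ₁ i)) t) := by
  have hmono : ∀ ξ₁ ∈ box, ∀ ξ₂ ∈ box, ξ₁ ≤ ξ₂ → ∀ t ≥ (0 : ℝ), φ t ξ₁ ≤ φ t ξ₂ := by
    intro ξ₁ h1 ξ₂ h2 h12 t ht
    have e1 := hφ ξ₁ h1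
    have e2 := hφ ξ₂ h2
    exact kamke_aux X hX box hbox f hlip hK (fun s => φ s ξ₁) (fun s => φ s ξ₂)
      (fun s hs => (e1.2 s hs).1) (fun s hs => (e2.2 s hs).1)
      (fun s hs => (e1.2 s hs).2) (fun s hs => (e2.2 s hs).2)
      (by simpa only [e1.1, e2.1] using h12) t ht
  constructor
  · rintro ⟨β, hβ, h⟩
    refine ⟨β, hβ, fun ξ₁ h1 ξ₂ h2 h12 t ht => ?_⟩
    have := h ξ₂ h2 ξ₁ h1 t ht
    have e : onenorm (ξ₂ - ξ₁) = ∑ i, (ξ₂ i - ξ₁ i) := by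
      unfold onenorm
      refine Finset.sum_congr rfl fun i _ => ?_
      exact abs_of_nonneg (sub_nonneg.2 (h12 i))
    rw [e] at this
    refine le_trans ?_ this
    unfold onenorm
    exact Finset.sum_le_sum fun i _ => le_abs_self _
  · rintro ⟨β, hβ, h⟩
    refine ⟨β, hβ, fun ξ₁ h1 ξ₂ h2 t ht => ?_⟩
    have ha : ξ₁ ⊓ ξ₂ ∈ box := by
      rw [hbox] at *
      intro i
      rcases le_total (ξ₁ i) (ξ₂ i) with hh | hh
      · simpa [hh] using h1 i
      · simpa [hh] using h2 i
    have hb : ξ₁ ⊔ ξ₂ ∈ box := by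
      rw [hbox] at *
      intro i
      rcases le_total (ξ₁ i) (ξ₂ i) with hh | hh
      · simpa [hh] using h2 i
      · simpa [hh] using h1 i
    have := h _ ha _ hb inf_le_sup t ht
    have e : onenorm (ξ₁ - ξ₂) = ∑ i, ((ξ₁ ⊔ ξ₂) i - (ξ₁ ⊓ ξ₂) i) := by
      unfold onenorm
      refine Finset.sum_congr rfl fun i _ => ?_
      simp only [Pi.sub_apply, Pi.sup_apply, Pi.inf_apply]
      rw [max_sub_min_eq_abs, abs_sub_comm]
    rw [e]
    refine le_trans ?_ this
    unfold onenorm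
    refine Finset.sum_le_sum fun i _ => ?_
    have a1 := hmono _ ha _ h1 inf_le_left t ht i
    have a2 := hmono _ ha _ h2 inf_le_right t ht i
    have b1 := hmono _ h1 _ hb le_sup_left t ht i
    have b2 := hmono _ h2 _ hb le_sup_right t ht i
    rw [Pi.sub_apply, abs_le]
    constructor <;> linarith
end

section
/- Let 𝒳 = 𝒳₁ × ⋯ × 𝒳ₙ ⊆ ℝⁿ be a product of n intervals (a box), and let f : [0,∞) × 𝒳 → ℝⁿ be continuous, Lipschitz continuous in its second argument uniformly in the first on compact sets, and such that x ↦ f(t,x) is type K on 𝒳 for each t ≥ 0. Assume that for every τ ≥ 0 and ξ ∈ 𝒳 there exists a differentiable solution x : [τ,∞) → 𝒳 of ẋ(t) = f(t,x(t)) with x(τ) = ξ. Then the system is uniformly nonexpansive with respect to 𝒳 — i.e. for all 0 ≤ t₀ ≤ t₁ and all differentiable solutions x¹, x² : [t₀,t₁] → 𝒳 of ẋ(t) = f(t,x(t)) one has |x¹(t₁) − x²(t₁)|₁ ≤ |x¹(t₀) − x²(t₀)|₁ — if and only if for every τ ≥ 0 and every pair ξ¹, ξ² ∈ 𝒳 with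 ξ¹ ≤ ξ² componentwise, ∑_{i=1}^n (f_i(τ,ξ²) − f_i(τ,ξ¹)) ≤ 0. -/
open Finset

theorem abs_right_deriv {g : ℝ → ℝ} {d x c : ℝ} (hg : HasDerivWithinAt g d (Set.Ici x) x)
    (h1 : 0 ≤ g x → d ≤ c) (h2 : g x ≤ 0 → -d ≤ c) :
    ∃ d', HasDerivWithinAt (fun t => |g t|) d' (Set.Ici x) x ∧ d' ≤ c := by
  rcases lt_trichotomy (g x) 0 with h | h | h
  · refine ⟨-d, ?_, h2 h.le⟩
    refine hg.neg.congr_of_eventuallyEq ?_ (abs_of_neg h)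
    filter_upwards [hg.continuousWithinAt.eventually (gt_mem_nhds h)] with t ht
    exact abs_of_neg ht
  · refine ⟨|d|, ?_, abs_le'.2 ⟨h1 h.ge, h2 h.le⟩⟩
    have hs : x ∉ Set.Ioi x := by simp
    rw [← hasDerivWithinAt_Ioi_iff_Ici] at hg ⊢
    rw [hasDerivWithinAt_iff_tendsto_slope' hs] at hg ⊢
    refine hg.abs.congr' ?_
    filter_upwards [self_mem_nhdsWithin] with t ht
    have ht' : 0 < t - x := sub_pos.2 ht
    simp [slope_def_field, h, abs_div, abs_of_pos ht']
  · refine ⟨d, ?_, h1 h.le⟩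
    refine hg.congr_of_eventuallyEq ?_ (abs_of_pos h)
    filter_upwards [hg.continuousWithinAt.eventually (lt_mem_nhds h)] with t ht
    exact abs_of_pos ht

/-- a system cooperative in a box `𝒳` (with solutions existing
forward in time from any initial condition in `𝒳`) is uniformly nonexpansive
with respect to `𝒳` (in the `1`-norm) if and only if
`∑_i (f_i(τ,ξ²) - f_i(τ,ξ¹)) ≤ 0` for all `τ ≥ 0` and all ordered pairs
`ξ¹ ≤ ξ²` in `𝒳`. -/
theorem stmt11 (n : ℕ) (hn : 0 < n) (X : Fin n → Set ℝ)
    (hX : ∀ i, (X i).OrdConnected)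
    (box : Set (Fin n → ℝ)) (hbox : box = {x : Fin n → ℝ | ∀ i, x i ∈ X i})
    (f : ℝ → (Fin n → ℝ) → (Fin n → ℝ))
    (hcont : ContinuousOn (fun p : ℝ × (Fin n → ℝ) => f p.1 p.2) (Set.Ici 0 ×ˢ box))
    (hlip : ∀ K ⊆ box, IsCompact K → ∃ L : ℝ, ∀ t ≥ (0 : ℝ), ∀ x ∈ K, ∀ y ∈ K,
      ‖f t x - f t y‖ ≤ L * ‖x - y‖)
    (hK : ∀ t ≥ (0 : ℝ), IsTypeKOn (f t) box)
    (hexist : ∀ τ ≥ (0 : ℝ), ∀ ξ ∈ box, ∃ x : ℝ → Fin n → ℝ, x τ = ξ ∧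
      ∀ t ≥ τ, x t ∈ box ∧ HasDerivAt x (f t (x t)) t) :
    (∀ t₀ t₁ : ℝ, 0 ≤ t₀ → t₀ ≤ t₁ → ∀ x₁ x₂ : ℝ → Fin n → ℝ,
      (∀ t ∈ Set.Icc t₀ t₁, x₁ t ∈ box ∧
        HasDerivWithinAt x₁ (f t (x₁ t)) (Set.Icc t₀ t₁) t) →
      (∀ t ∈ Set.Icc t₀ t₁, x₂ t ∈ box ∧
        HasDerivWithinAt x₂ (f t (x₂ t)) (Set.Icc t₀ t₁) t) →
      onenorm (x₁ t₁ - x₂ t₁) ≤ onenorm (x₁ t₀ - x₂ t₀)) ↔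
    (∀ τ ≥ (0 : ℝ), ∀ ξ₁ ∈ box, ∀ ξ₂ ∈ box, ξ₁ ≤ ξ₂ →
      (∑ i, (f τ ξ₂ i - f τ ξ₁ i)) ≤ 0) := by
  subst hbox
  constructor
  · intro H τ hτ ξ₁ h₁ ξ₂ h₂ hle
    obtain ⟨x, hx0, hx⟩ := hexist τ hτ ξ₁ h₁
    obtain ⟨y, hy0, hy⟩ := hexist τ hτ ξ₂ h₂
    have hd : HasDerivAt (fun t => ∑ i, (y t i - x t i)) (∑ i, (f τ ξ₂ i - f τ ξ₁ i)) τ := by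
      refine HasDerivAt.fun_sum fun i _ => ?_
      have a := hasDerivAt_pi.1 (hx τ le_rfl).2 i
      have b := hasDerivAt_pi.1 (hy τ le_rfl).2 i
      rw [hx0] at a
      rw [hy0] at b
      exact b.sub a
    have hw := hd.hasDerivWithinAt (s := Set.Ioi τ)
    rw [hasDerivWithinAt_iff_tendsto_slope' (by simp)] at hw
    refine le_of_tendsto hw ?_
    filter_upwards [self_mem_nhdsWithin] with t ht
    have ht' : τ < t := ht
    have key := H τ t hτ ht'.le y x
      (fun s hs => ⟨(hy s hs.1).1, (hy s hs.1).2.hasDerivWithinAt⟩)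
      (fun s hs => ⟨(hx s hs.1).1, (hx s hs.1).2.hasDerivWithinAt⟩)
    have e1 : ∑ i, (y t i - x t i) ≤ onenorm (y t - x t) :=
      Finset.sum_le_sum fun i _ => le_abs_self _
    have e2 : onenorm (y τ - x τ) = ∑ i, (y τ i - x τ i) := by
      refine Finset.sum_congr rfl fun i _ => ?_
      rw [hx0, hy0]
      exact abs_of_nonneg (sub_nonneg.2 (hle i))
    rw [slope_def_field]
    exact div_nonpos_of_nonpos_of_nonneg (by linarith) (by linarith)
  · intro H t₀ t₁ h0 h01 x y hx hy
    have hright : ∀ t ∈ Set.Ico t₀ t₁, ∃ d',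
        HasDerivWithinAt (fun t => onenorm (x t - y t)) d' (Set.Ici t) t ∧ d' ≤ 0 := by
      intro t ht
      have htc : t ∈ Set.Icc t₀ t₁ := ⟨ht.1, ht.2.le⟩
      have ht0 : 0 ≤ t := h0.trans ht.1
      obtain ⟨bx, dx⟩ := hx t htc
      obtain ⟨by', dy⟩ := hy t htc
      have hmem : Set.Icc t₀ t₁ ∈ nhdsWithin t (Set.Ici t) :=
        Filter.mem_of_superset (Icc_mem_nhdsGE ht.2) (Set.Icc_subset_Icc_left ht.1)
      have dx' := hasDerivWithinAt_pi.1 (dx.mono_of_mem_nhdsWithin hmem)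
      have dy' := hasDerivWithinAt_pi.1 (dy.mono_of_mem_nhdsWithin hmem)
      have bM : x t ⊔ y t ∈ {x : Fin n → ℝ | ∀ i, x i ∈ X i} := by
        intro i
        rcases le_total (x t i) (y t i) with h | h
        · simpa [h] using by' i
        · simpa [h] using bx i
      have bm : x t ⊓ y t ∈ {x : Fin n → ℝ | ∀ i, x i ∈ X i} := by
        intro i
        rcases le_total (x t i) (y t i) with h | h
        · simpa [h] using bx i
        · simpa [h] using by' i
      have hi : ∀ i, ∃ d', HasDerivWithinAt (fun s => |x s i - y s i|) d' (Set.Ici t) t ∧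
          d' ≤ f t (x t ⊔ y t) i - f t (x t ⊓ y t) i := by
        intro i
        refine abs_right_deriv ((dx' i).sub (dy' i)) ?_ ?_
        · intro h
          have h' : y t i ≤ x t i := sub_nonneg.1 h
          have a := hK t ht0 _ bx _ bM le_sup_left i (by simp [h'])
          have b := hK t ht0 _ bm _ by' inf_le_right i (by simp [h'])
          linarith
        · intro h
          have h' : x t i ≤ y t i := sub_nonpos.1 h
          have a := hK t ht0 _ by' _ bM le_sup_right i (by simp [h'])
          have b := hK t ht0 _ bm _ bx inf_le_left i (by simp [h'])
          linarith
      choose d' hd' hle' using hi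
      refine ⟨∑ i, d' i, HasDerivWithinAt.fun_sum fun i _ => hd' i, ?_⟩
      exact (Finset.sum_le_sum fun i _ => hle' i).trans (H t ht0 _ bm _ bM inf_le_sup)
    have hc : ContinuousOn (fun t => onenorm (x t - y t)) (Set.Icc t₀ t₁) := by
      have cx : ContinuousOn x (Set.Icc t₀ t₁) := fun t ht => (hx t ht).2.continuousWithinAt
      have cy : ContinuousOn y (Set.Icc t₀ t₁) := fun t ht => (hy t ht).2.continuousWithinAt
      refine continuousOn_finsetSum _ fun i _ => ?_
      exact ((continuousOn_pi.1 cx i).sub (continuousOn_pi.1 cy i)).abs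
    choose! d' hd' hle' using hright
    exact image_le_of_deriv_right_le_deriv_boundary (B := fun _ => onenorm (x t₀ - y t₀))
      (B' := fun _ => 0) hc hd' le_rfl
      continuousOn_const (fun t _ => hasDerivWithinAt_const _ _ _) hle' ⟨h01, le_rfl⟩
end

section
/- Consider the compartmental system (S) on the box 𝒳 = [0,c₁] × ⋯ × [0,cₙ] with right-hand side Q satisfying assumptions (A1)–(A6). Then (S) is uniformly nonexpansive with respect to 𝒳: for all 0 ≤ t₀ ≤ t₁ and all differentiable solutions x¹, x² : [t₀,t₁] → 𝒳 of ẋ(t) = Q(t, x(t)), one has |x¹(t₁) − x²(t₁)|₁ ≤ |x¹(t₀) − x²(t₀)|₁. -/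
open Finset

/-- Regularity assumption (A1) for a scalar coefficient function
`h : [0,∞) × [0, ci] → ℝ`: continuity, nonnegativity and Lipschitz continuity
in the second argument uniformly in the first. -/
def A1fun (ci : ℝ) (h : ℝ → ℝ → ℝ) : Prop :=
  ContinuousOn (fun p : ℝ × ℝ => h p.1 p.2) (Set.Ici 0 ×ˢ Set.Icc 0 ci) ∧
  (∀ t ∈ Set.Ici (0 : ℝ), ∀ s ∈ Set.Icc 0 ci, 0 ≤ h t s) ∧
  ∃ L : ℝ, ∀ t ∈ Set.Ici (0 : ℝ), ∀ s₁ ∈ Set.Icc 0 ci, ∀ s₂ ∈ Set.Icc 0 ci,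
    |h t s₁ - h t s₂| ≤ L * |s₁ - s₂|

/-- The box `𝒳 = [0,c₁] × ⋯ × [0,cₙ]`. -/
def boxIcc {n : ℕ} (c : Fin n → ℝ) : Set (Fin n → ℝ) :=
  {x | ∀ i, x i ∈ Set.Icc 0 (c i)}

/-- Right-hand side of the compartmental system (S). -/
def Qrhs {n : ℕ} (f0 : Fin n → ℝ → ℝ → ℝ) (fc : Fin n → Fin n → ℝ → ℝ → ℝ)
    (g Ienv : Fin n → ℝ → ℝ → ℝ) (t : ℝ) (x : Fin n → ℝ) : Fin n → ℝ := fun i =>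
  (∑ j ∈ univ.erase i, fc i j t (x i) * g j t (x j)) + Ienv i t (x i)
    - (f0 i t (x i) + ∑ j ∈ univ.erase i, fc j i t (x j)) * g i t (x i)

theorem abs_right_deriv_s13 {z : ℝ → ℝ} {d t : ℝ} (h : HasDerivWithinAt z d (Set.Ici t) t) :
    ∃ σ : ℝ, (σ = 1 ∨ σ = -1) ∧ σ * z t = |z t| ∧
      HasDerivWithinAt (fun s => |z s|) (σ * d) (Set.Ici t) t := by
  rcases lt_trichotomy (z t) 0 with hz | hz | hz
  · refine ⟨-1, Or.inr rfl, by rw [abs_of_neg hz]; ring, ?_⟩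
    exact (hasDerivAt_abs_neg hz).comp_hasDerivWithinAt t h
  · have key : HasDerivWithinAt (fun s => |z s|) |d| (Set.Ici t) t := by
      rw [← hasDerivWithinAt_Ioi_iff_Ici,
        hasDerivWithinAt_iff_tendsto_slope' (by simp)] at h ⊢
      refine (h.abs).congr' ?_
      filter_upwards [self_mem_nhdsWithin] with s hs
      have hs' : t < s := hs
      simp only [slope_def_field, hz, abs_zero, sub_zero, abs_div]
      rw [abs_of_pos (sub_pos.2 hs')]
    rcases le_total 0 d with hd | hd
    · refine ⟨1, Or.inl rfl, by simp [hz], ?_⟩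
      rwa [abs_of_nonneg hd, ← one_mul d] at key
    · refine ⟨-1, Or.inr rfl, by simp [hz], ?_⟩
      rwa [abs_of_nonpos hd, ← neg_one_mul d] at key
  · refine ⟨1, Or.inl rfl, by rw [abs_of_pos hz]; ring, ?_⟩
    exact (hasDerivAt_abs_pos hz).comp_hasDerivWithinAt t h

theorem sign_flow {n : ℕ} (σ : Fin n → ℝ) (F : Fin n → Fin n → ℝ) (G : Fin n → ℝ)
    (hG : ∀ i, σ i * G i ≤ 0) (hF : ∀ i j, j ≠ i → (σ i - σ j) * F i j ≤ 0) :
    ∑ i, σ i * (∑ j ∈ univ.erase i, F i j - ∑ j ∈ univ.erase i, F j i + G i) ≤ 0 := by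
  have e (i : Fin n) (H : Fin n → ℝ) :
      ∑ j ∈ univ.erase i, H j = ∑ j, if j ≠ i then H j else 0 := by
    rw [← Finset.sum_filter]
    congr 1
    ext j
    simp
  have h2 : ∑ i, ∑ j, (if j ≠ i then σ i * F j i else 0)
      = ∑ i, ∑ j, (if j ≠ i then σ j * F i j else 0) := by
    rw [Finset.sum_comm]
    refine Finset.sum_congr rfl fun i _ => Finset.sum_congr rfl fun j _ => ?_
    simp only [ne_comm]
  have h1 : ∑ i, σ i * (∑ j ∈ univ.erase i, F i j - ∑ j ∈ univ.erase i, F j i + G i)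
      = ∑ i, ∑ j, (if j ≠ i then (σ i - σ j) * F i j else 0) + ∑ i, σ i * G i := by
    have : ∑ i, ∑ j, (if j ≠ i then (σ i - σ j) * F i j else 0)
        = ∑ i, ∑ j, (if j ≠ i then σ i * F i j else 0)
          - ∑ i, ∑ j, (if j ≠ i then σ j * F i j else 0) := by
      simp only [← Finset.sum_sub_distrib]
      refine Finset.sum_congr rfl fun i _ => Finset.sum_congr rfl fun j _ => ?_
      split_ifs <;> ring
    rw [this, ← h2, ← Finset.sum_sub_distrib, ← Finset.sum_add_distrib]
    refine Finset.sum_congr rfl fun i _ => ?_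
    rw [mul_add, mul_sub, Finset.mul_sum, Finset.mul_sum, e, e]
  rw [h1]
  refine add_nonpos (Finset.sum_nonpos fun i _ => Finset.sum_nonpos fun j _ => ?_)
    (Finset.sum_nonpos fun i _ => hG i)
  split_ifs with h
  · exact hF i j h
  · exact le_rfl

/-- under assumptions (A1)–(A6), the compartmental system (S) is
uniformly nonexpansive with respect to the box `𝒳` in the `1`-norm. -/
theorem stmt13 (n : ℕ) (hn : 0 < n) (c : Fin n → ℝ) (hc : ∀ i, 0 < c i)
    (f0 : Fin n → ℝ → ℝ → ℝ) (fc : Fin n → Fin n → ℝ → ℝ → ℝ)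
    (g Ienv : Fin n → ℝ → ℝ → ℝ)
    (hA1 : (∀ i, A1fun (c i) (f0 i)) ∧ (∀ i, A1fun (c i) (g i)) ∧
      (∀ i, A1fun (c i) (Ienv i)) ∧ ∀ i j, j ≠ i → A1fun (c i) (fc i j))
    (hA2 : ∀ t ≥ (0 : ℝ), ∀ i, Ienv i t 0 = 0 ∧ Ienv i t (c i) = 0 ∧
      g i t 0 = 0 ∧ ∀ j, j ≠ i → fc i j t (c i) = 0)
    (hA3 : ∀ t ≥ (0 : ℝ), ∀ i, ∀ xi yi : ℝ, 0 ≤ xi → xi ≤ yi → yi ≤ c i →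
      yi - xi ≤ g i t yi - g i t xi)
    (hA4 : ∀ t ≥ (0 : ℝ), ∀ i j, j ≠ i → AntitoneOn (fc i j t) (Set.Icc 0 (c i)))
    (hA5 : ∀ t ≥ (0 : ℝ), ∀ i, MonotoneOn (f0 i t) (Set.Icc 0 (c i)))
    (hA6 : ∀ t ≥ (0 : ℝ), ∀ i, AntitoneOn (Ienv i t) (Set.Icc 0 (c i))) :
    ∀ t₀ t₁ : ℝ, 0 ≤ t₀ → t₀ ≤ t₁ → ∀ x₁ x₂ : ℝ → Fin n → ℝ,
      (∀ t ∈ Set.Icc t₀ t₁, x₁ t ∈ boxIcc c ∧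
        HasDerivWithinAt x₁ (Qrhs f0 fc g Ienv t (x₁ t)) (Set.Icc t₀ t₁) t) →
      (∀ t ∈ Set.Icc t₀ t₁, x₂ t ∈ boxIcc c ∧
        HasDerivWithinAt x₂ (Qrhs f0 fc g Ienv t (x₂ t)) (Set.Icc t₀ t₁) t) →
      onenorm (x₁ t₁ - x₂ t₁) ≤ onenorm (x₁ t₀ - x₂ t₀) := by
  intro t₀ t₁ h0 h01 x₁ x₂ hx₁ hx₂
  obtain ⟨hf0, hg, hI, hfc⟩ := hA1
  have hgm : ∀ t ≥ (0 : ℝ), ∀ i, MonotoneOn (g i t) (Set.Icc 0 (c i)) := by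
    intro t ht i a ha b hb hab
    have := hA3 t ht i a b ha.1 hab hb.2
    linarith
  have key : ∀ t ≥ (0 : ℝ), ∀ x ∈ boxIcc c, ∀ y ∈ boxIcc c, ∀ σ : Fin n → ℝ,
      (∀ i, (σ i = 1 ∨ σ i = -1) ∧ σ i * (x i - y i) = |x i - y i|) →
      ∑ i, σ i * (Qrhs f0 fc g Ienv t x i - Qrhs f0 fc g Ienv t y i) ≤ 0 := by
    intro t ht x hx y hy σ hσ
    have hcase : ∀ i, (σ i = 1 ∧ y i ≤ x i) ∨ (σ i = -1 ∧ x i ≤ y i) := by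
      intro i
      obtain ⟨h | h, h'⟩ := hσ i
      · left
        refine ⟨h, ?_⟩
        rw [h] at h'
        have := abs_nonneg (x i - y i)
        linarith
      · right
        refine ⟨h, ?_⟩
        rw [h] at h'
        have := abs_nonneg (x i - y i)
        linarith
    have := sign_flow σ (fun i j => fc i j t (x i) * g j t (x j) - fc i j t (y i) * g j t (y j))
      (fun i => (Ienv i t (x i) - Ienv i t (y i))
        - (f0 i t (x i) * g i t (x i) - f0 i t (y i) * g i t (y i))) ?_ ?_
    · refine le_of_eq_of_le (Finset.sum_congr rfl fun i _ => ?_) this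
      simp only [Qrhs, Finset.sum_sub_distrib, add_mul, Finset.sum_mul]
      ring
    · intro i
      have aux : ∀ a ∈ Set.Icc 0 (c i), ∀ b ∈ Set.Icc 0 (c i), a ≤ b →
          f0 i t a * g i t a ≤ f0 i t b * g i t b ∧ Ienv i t b ≤ Ienv i t a := by
        intro a ha b hb hab
        exact ⟨mul_le_mul (hA5 t ht i ha hb hab) (hgm t ht i ha hb hab)
          ((hg i).2.1 t ht a ha) ((hf0 i).2.1 t ht b hb), hA6 t ht i ha hb hab⟩
      rcases hcase i with ⟨h, h'⟩ | ⟨h, h'⟩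
      · have := aux _ (hy i) _ (hx i) h'
        rw [h]; linarith [this.1, this.2]
      · have := aux _ (hx i) _ (hy i) h'
        rw [h]; linarith [this.1, this.2]
    · intro i j hij
      have aux : ∀ a ∈ Set.Icc 0 (c i), ∀ b ∈ Set.Icc 0 (c i), a ≤ b →
          ∀ p ∈ Set.Icc 0 (c j), ∀ q ∈ Set.Icc 0 (c j), p ≤ q →
          fc i j t b * g j t p ≤ fc i j t a * g j t q := by
        intro a ha b hb hab p hp q hq hpq
        exact mul_le_mul (hA4 t ht i j hij ha hb hab) (hgm t ht j hp hq hpq)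
          ((hg j).2.1 t ht p hp) ((hfc i j hij).2.1 t ht a ha)
      rcases hcase i with ⟨h, h'⟩ | ⟨h, h'⟩ <;> rcases hcase j with ⟨k, k'⟩ | ⟨k, k'⟩
      · rw [h, k]; simp
      · have := aux _ (hy i) _ (hx i) h' _ (hx j) _ (hy j) k'
        rw [h, k]; linarith
      · have := aux _ (hx i) _ (hy i) h' _ (hy j) _ (hx j) k'
        rw [h, k]; linarith
      · rw [h, k]; simp
  have hd : ∀ t ∈ Set.Ico t₀ t₁, ∃ d : ℝ, d ≤ 0 ∧
      HasDerivWithinAt (fun s => onenorm (x₁ s - x₂ s)) d (Set.Ici t) t := by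
    intro t ht
    have htI : t ∈ Set.Icc t₀ t₁ := ⟨ht.1, ht.2.le⟩
    obtain ⟨hb1, hD1⟩ := hx₁ t htI
    obtain ⟨hb2, hD2⟩ := hx₂ t htI
    have hmem : Set.Icc t₀ t₁ ∈ nhdsWithin t (Set.Ici t) :=
      Filter.mem_of_superset (Icc_mem_nhdsGE ht.2) (Set.Icc_subset_Icc_left ht.1)
    have hD1' := hasDerivWithinAt_pi.1 (hD1.mono_of_mem_nhdsWithin hmem)
    have hD2' := hasDerivWithinAt_pi.1 (hD2.mono_of_mem_nhdsWithin hmem)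
    choose σ hσ1 hσ2 hσ3 using fun i => abs_right_deriv_s13 ((hD1' i).sub (hD2' i))
    refine ⟨_, key t (h0.trans ht.1) _ hb1 _ hb2 σ fun i => ⟨hσ1 i, hσ2 i⟩, ?_⟩
    exact HasDerivWithinAt.fun_sum fun i _ => hσ3 i
  have hcont : ContinuousOn (fun s => onenorm (x₁ s - x₂ s)) (Set.Icc t₀ t₁) := by
    have c1 : ContinuousOn x₁ (Set.Icc t₀ t₁) := fun t ht => (hx₁ t ht).2.continuousWithinAt
    have c2 : ContinuousOn x₂ (Set.Icc t₀ t₁) := fun t ht => (hx₂ t ht).2.continuousWithinAt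
    unfold onenorm
    refine continuousOn_finset_sum _ fun i _ => ?_
    exact ((continuousOn_pi.1 c1 i).sub (continuousOn_pi.1 c2 i)).abs
  choose! d hd0 hd1 using hd
  exact image_le_of_deriv_right_le_deriv_boundary hcont hd1
    (B := fun _ => onenorm (x₁ t₀ - x₂ t₀)) (B' := fun _ => 0) le_rfl continuousOn_const
    (fun x _ => hasDerivWithinAt_const _ _ _) hd0 ⟨h01, le_rfl⟩
end

section
/- Consider the compartmental system (S) on the box 𝒳 = [0,c₁] × ⋯ × [0,cₙ] satisfying assumptions (A1)–(A5), and let F(t,x) be its associated compartmental matrix and g(t,x) = (g₁(t,x₁),…,gₙ(t,xₙ)). Then there exists a finite constant b̃ ≥ 0 (one may take b̃ = max_{1≤i<j≤n} ḡ_j L_{ij}, where ḡ_j = sup_{t≥0} g_j(t,c_j) and L_{ij} is a Lipschitz constant, uniform in t, of x_i ↦ f_{ij}(t,x_i) on [0,c_i]) such that for every t ≥ 0 and every x, y ∈ 𝒳 with x ≤ y componentwise there is a compartmental matrix D(t,x,y) ∈ ℝ^{n×n} with D_{ij}(t,x,y) ≤ b̃ for all 1 ≤ i < j ≤ n and F(t,y)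 g(t,y) − F(t,x) g(t,x) = (F(t,y) + D(t,x,y)) (g(t,y) − g(t,x)). -/
open Finset

/-- The compartmental matrix `F(t,x)` of system (S):
`F_{ij}(t,x) = f_{ij}(t,x_i)` for `j ≠ i`, and
`F_{ii}(t,x) = -f_{0i}(t,x_i) - ∑_{j≠i} f_{ji}(t,x_j)`. -/
def Fmat {n : ℕ} (f0 : Fin n → ℝ → ℝ → ℝ) (fc : Fin n → Fin n → ℝ → ℝ → ℝ)
    (t : ℝ) (x : Fin n → ℝ) : Matrix (Fin n) (Fin n) ℝ :=
  Matrix.of fun i j =>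
    if i = j then -(f0 i t (x i)) - ∑ k ∈ univ.erase i, fc k i t (x k)
    else fc i j t (x i)

/-- The vector `g(t,x) = (g₁(t,x₁),…,gₙ(t,xₙ))`. -/
def gvec {n : ℕ} (g : Fin n → ℝ → ℝ → ℝ) (t : ℝ) (x : Fin n → ℝ) : Fin n → ℝ :=
  fun i => g i t (x i)

lemma Fmat_mulVec_aux {n : ℕ} (p : Fin n → ℝ) (h : Fin n → Fin n → ℝ) (v : Fin n → ℝ) (i : Fin n) :
    (Matrix.mulVec (Matrix.of fun i j => (if i = j then p i else 0) + h i j) v) i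
      = p i * v i + ∑ j, h i j * v j := by
  simp [Matrix.mulVec, dotProduct, add_mul, Finset.sum_add_distrib]

lemma Fmat_eq_aux {n : ℕ} (f0 : Fin n → ℝ → ℝ → ℝ) (fc : Fin n → Fin n → ℝ → ℝ → ℝ)
    (t : ℝ) (x : Fin n → ℝ) : Fmat f0 fc t x = Matrix.of fun i j =>
      (if i = j then (-(f0 i t (x i)) - ∑ k, if k = i then 0 else fc k i t (x k)) else 0)
        + (if i = j then 0 else fc i j t (x i)) := by
  ext i j
  simp only [Fmat, Matrix.of_apply]
  by_cases hij : i = j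
  · subst hij
    simp only [if_true, add_zero]
    congr 1
    rw [← Finset.add_sum_erase univ _ (Finset.mem_univ i)]
    simp only [if_true, zero_add]
    apply Finset.sum_congr rfl
    intro k hk
    rw [if_neg (Finset.ne_of_mem_erase hk)]
  · simp [hij]

/-- under (A1)–(A5) there is a finite constant `b̃ ≥ 0` such that
for all `t ≥ 0` and all ordered `x ≤ y` in the box `𝒳` there is a compartmental
matrix `D(t,x,y)` whose strictly upper-triangular entries are bounded by `b̃`
and such that
`F(t,y) g(t,y) − F(t,x) g(t,x) = (F(t,y) + D(t,x,y)) (g(t,y) − g(t,x))`. -/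
theorem stmt14 (n : ℕ) (hn : 0 < n) (c : Fin n → ℝ) (hc : ∀ i, 0 < c i)
    (f0 : Fin n → ℝ → ℝ → ℝ) (fc : Fin n → Fin n → ℝ → ℝ → ℝ)
    (g : Fin n → ℝ → ℝ → ℝ) (Ienv : Fin n → ℝ → ℝ → ℝ)
    (hA1 : (∀ i, A1fun (c i) (f0 i)) ∧ (∀ i, A1fun (c i) (g i)) ∧
      (∀ i, A1fun (c i) (Ienv i)) ∧ ∀ i j, j ≠ i → A1fun (c i) (fc i j))
    (hA2 : ∀ t ≥ (0 : ℝ), ∀ i, Ienv i t 0 = 0 ∧ Ienv i t (c i) = 0 ∧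
      g i t 0 = 0 ∧ ∀ j, j ≠ i → fc i j t (c i) = 0)
    (hA3 : ∀ t ≥ (0 : ℝ), ∀ i, ∀ xi yi : ℝ, 0 ≤ xi → xi ≤ yi → yi ≤ c i →
      yi - xi ≤ g i t yi - g i t xi)
    (hA4 : ∀ t ≥ (0 : ℝ), ∀ i j, j ≠ i → AntitoneOn (fc i j t) (Set.Icc 0 (c i)))
    (hA5 : ∀ t ≥ (0 : ℝ), ∀ i, MonotoneOn (f0 i t) (Set.Icc 0 (c i))) :
    ∃ btil : ℝ, 0 ≤ btil ∧
      ∀ t ≥ (0 : ℝ), ∀ x ∈ boxIcc c, ∀ y ∈ boxIcc c, x ≤ y →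
        ∃ D : Matrix (Fin n) (Fin n) ℝ, IsCompartmental D ∧
          (∀ i j : Fin n, i < j → D i j ≤ btil) ∧
          (Fmat f0 fc t y).mulVec (gvec g t y) - (Fmat f0 fc t x).mulVec (gvec g t x)
            = (Fmat f0 fc t y + D).mulVec (gvec g t y - gvec g t x) := by
  obtain ⟨-, hg, -, hf⟩ := hA1
  have hL : ∀ i j, ∃ L : ℝ, j ≠ i → ∀ t ∈ Set.Ici (0 : ℝ), ∀ s₁ ∈ Set.Icc 0 (c i),
      ∀ s₂ ∈ Set.Icc 0 (c i), |fc i j t s₁ - fc i j t s₂| ≤ L * |s₁ - s₂| := by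
    intro i j
    by_cases h : j ≠ i
    · obtain ⟨L, hL⟩ := (hf i j h).2.2
      exact ⟨L, fun _ => hL⟩
    · exact ⟨0, fun h' => absurd h' h⟩
  choose L hL using hL
  have hM : ∀ i, ∃ M : ℝ, 0 ≤ M ∧ ∀ t ≥ (0 : ℝ), ∀ s ∈ Set.Icc 0 (c i), g i t s ≤ M := by
    intro i
    obtain ⟨K, hK⟩ := (hg i).2.2
    refine ⟨|K| * c i, mul_nonneg (abs_nonneg _) (hc i).le, fun t ht s hs => ?_⟩
    have h1 := hK t ht s hs 0 ⟨le_rfl, (hc i).le⟩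
    rw [(hA2 t ht i).2.2.1, sub_zero, sub_zero, abs_of_nonneg hs.1] at h1
    calc g i t s ≤ |g i t s| := le_abs_self _
      _ ≤ K * s := h1
      _ ≤ |K| * s := mul_le_mul_of_nonneg_right (le_abs_self _) hs.1
      _ ≤ |K| * c i := mul_le_mul_of_nonneg_left hs.2 (abs_nonneg _)
  choose M hM0 hM using hM
  have hB0 : ∀ i j, 0 ≤ |L i j| * M j := fun i j => mul_nonneg (abs_nonneg _) (hM0 j)
  refine ⟨∑ i, ∑ j, |L i j| * M j, Finset.sum_nonneg fun i _ => Finset.sum_nonneg fun j _ => hB0 i j, ?_⟩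
  intro t ht x hx y hy hxy
  have hΔ : ∀ i, y i - x i ≤ g i t (y i) - g i t (x i) := fun i =>
    hA3 t ht i _ _ (hx i).1 (hxy i) (hy i).2
  have hΔ0 : ∀ i, 0 ≤ g i t (y i) - g i t (x i) := fun i =>
    (sub_nonneg.2 (hxy i)).trans (hΔ i)
  have hz : ∀ i, g i t (y i) - g i t (x i) = 0 → y i = x i := fun i h => by
    have := hΔ i
    have := hxy i
    linarith
  have hgx : ∀ i, 0 ≤ g i t (x i) := fun i => (hg i).2.1 t ht _ (hx i)
  obtain ⟨a, ha⟩ : ∃ a : Fin n → Fin n → ℝ, a = fun i j => if i = j then 0 else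
    (fc i j t (x i) - fc i j t (y i)) * g j t (x j) / (g i t (y i) - g i t (x i)) := ⟨_, rfl⟩
  obtain ⟨e, he⟩ : ∃ e : Fin n → ℝ, e = fun i =>
    (f0 i t (y i) - f0 i t (x i)) * g i t (x i) / (g i t (y i) - g i t (x i)) := ⟨_, rfl⟩
  have he0 : ∀ i, 0 ≤ e i := fun i => by
    rw [he]
    exact div_nonneg (mul_nonneg (sub_nonneg.2 (hA5 t ht i (hx i) (hy i) (hxy i))) (hgx i)) (hΔ0 i)
  have ha0 : ∀ i j, 0 ≤ a i j := fun i j => by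
    rw [ha]
    dsimp only
    split_ifs with h
    · exact le_rfl
    · exact div_nonneg (mul_nonneg (sub_nonneg.2 (hA4 t ht i j (Ne.symm h) (hx i) (hy i) (hxy i)))
        (hgx j)) (hΔ0 i)
  have heΔ : ∀ i, e i * (g i t (y i) - g i t (x i)) =
      (f0 i t (y i) - f0 i t (x i)) * g i t (x i) := fun i => by
    rw [he]
    by_cases h : g i t (y i) - g i t (x i) = 0
    · simp [hz i h]
    · exact div_mul_cancel₀ _ h
  have haΔ : ∀ i j, a i j * (g i t (y i) - g i t (x i)) =
      ((if i = j then 0 else fc i j t (x i)) - (if i = j then 0 else fc i j t (y i)))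
        * g j t (x j) := fun i j => by
    rw [ha]
    by_cases hij : i = j
    · simp [hij]
    simp only [if_neg hij]
    by_cases h : g i t (y i) - g i t (x i) = 0
    · simp [hz i h]
    · exact div_mul_cancel₀ _ h
  have haB : ∀ i j, a i j ≤ |L i j| * M j := fun i j => by
    by_cases hij : i = j
    · rw [ha]
      simpa [hij] using hB0 j j
    by_cases h : g i t (y i) - g i t (x i) = 0
    · rw [ha]
      simpa [hij, h] using hB0 i j
    have hpos := lt_of_le_of_ne (hΔ0 i) (Ne.symm h)
    rw [ha]
    simp only [if_neg hij]
    rw [div_le_iff₀ hpos]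
    have h1 : fc i j t (x i) - fc i j t (y i) ≤ |L i j| * (g i t (y i) - g i t (x i)) := by
      calc _ ≤ _ := le_abs_self _
        _ ≤ L i j * |x i - y i| := hL i j (Ne.symm hij) t ht _ (hx i) _ (hy i)
        _ ≤ |L i j| * |x i - y i| := mul_le_mul_of_nonneg_right (le_abs_self _) (abs_nonneg _)
        _ = |L i j| * (y i - x i) := by rw [abs_sub_comm, abs_of_nonneg (sub_nonneg.2 (hxy i))]
        _ ≤ _ := mul_le_mul_of_nonneg_left (hΔ i) (abs_nonneg _)
    calc _ ≤ |L i j| * (g i t (y i) - g i t (x i)) * M j :=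
          mul_le_mul h1 (hM j t ht _ (hx j)) (hgx j) (mul_nonneg (abs_nonneg _) (hΔ0 i))
      _ = _ := by ring
  refine ⟨Matrix.of fun i j => (if i = j then (-e i - ∑ k, a i k) else 0) + a j i, ⟨?_, ?_⟩, ?_, ?_⟩
  · intro i j hij
    simpa [hij] using ha0 j i
  · intro i
    simp only [Matrix.of_apply, Finset.sum_add_distrib, Finset.sum_ite_eq', Finset.mem_univ, if_true]
    have := he0 i
    linarith
  · intro i j hij
    simp only [Matrix.of_apply, if_neg hij.ne, zero_add]
    calc a j i ≤ |L j i| * M i := haB j i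
      _ ≤ ∑ i, |L j i| * M i :=
        Finset.single_le_sum (f := fun i => |L j i| * M i) (fun i _ => hB0 j i) (Finset.mem_univ i)
      _ ≤ _ := Finset.single_le_sum (f := fun j => ∑ i, |L j i| * M i)
        (fun j _ => Finset.sum_nonneg fun i _ => hB0 j i) (Finset.mem_univ j)
  · rw [Matrix.add_mulVec]
    ext i
    simp only [Pi.sub_apply, Pi.add_apply, Fmat_eq_aux, Fmat_mulVec_aux, gvec]
    have hflip : ∀ z : Fin n → ℝ, (∑ k, if k = i then 0 else fc k i t (z k)) * g i t (x i)
        = ∑ k, (if k = i then 0 else fc k i t (z k)) * g i t (x i) := fun z => Finset.sum_mul _ _ _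
    have e1 : (∑ k, a i k) * (g i t (y i) - g i t (x i)) =
        ∑ j, (if i = j then 0 else fc i j t (x i)) * g j t (x j)
        - ∑ j, (if i = j then 0 else fc i j t (y i)) * g j t (x j) := by
      rw [Finset.sum_mul, ← Finset.sum_sub_distrib]
      exact Finset.sum_congr rfl fun j _ => by rw [haΔ, sub_mul]
    have e2 : ∑ j, a j i * (g j t (y j) - g j t (x j)) =
        (∑ k, if k = i then 0 else fc k i t (x k)) * g i t (x i)
        - (∑ k, if k = i then 0 else fc k i t (y k)) * g i t (x i) := by
      rw [← sub_mul, ← Finset.sum_sub_distrib, Finset.sum_mul]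
      exact Finset.sum_congr rfl fun j _ => haΔ j i
    have e3 := heΔ i
    have e4 : ∑ j, (if i = j then 0 else fc i j t (y i)) * (g j t (y j) - g j t (x j)) =
        ∑ j, (if i = j then 0 else fc i j t (y i)) * g j t (y j)
        - ∑ j, (if i = j then 0 else fc i j t (y i)) * g j t (x j) := by
      rw [← Finset.sum_sub_distrib]
      exact Finset.sum_congr rfl fun j _ => by rw [mul_sub]
    rw [e2, e4, sub_mul (-e i), e1, neg_mul, e3]
    ring
end
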